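/- arXiv:1810.00877 — 11 statements merged into one kernel-verified Lean document; each statement's English description precedes it below -/
import Mathlib

section
/- Let 0 < δ < 1/2, ε > 0, Δ > 0, and let f be the truncated Laplacian density with parameters λ = Δ/ε, A = (Δ/ε)·log(1 + (e^ε − 1)/(2δ)), B = 1/(2λ(1 − e^{−A/λ})). Then the probability mass of the interval [A − Δ, A] is exactly δ, i.e., ∫_{A−Δ}^{A} f(x) dx = δ. -/
open MeasureTheory Real

/-- For the truncated Laplacian density, the probability mass of the
interval `[A − Δ, A]` is exactly `δ`: `∫_{A−Δ}^{A} f(x) dx = δ`. -/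
theorem truncatedLaplacian_tail_mass
    (ε δ Δ lam A B : ℝ) (f : ℝ → ℝ)
    (hδ0 : 0 < δ) (hδ : δ < 1 / 2) (hε : 0 < ε) (hΔ : 0 < Δ)
    (hlam : lam = Δ / ε)
    (hA : A = (Δ / ε) * Real.log (1 + (Real.exp ε - 1) / (2 * δ)))
    (hB : B = 1 / (2 * lam * (1 - Real.exp (-A / lam))))
    (hf : ∀ x : ℝ, f x = if x ∈ Set.Icc (-A) A then B * Real.exp (-|x| / lam) else 0) :
    ∫ x in (A - Δ)..A, f x = δ := by
  have hE : 1 < Real.exp ε := Real.one_lt_exp_iff.mpr hε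
  have hl : 0 < lam := by rw [hlam]; positivity
  have hpos : 0 < 1 + (Real.exp ε - 1) / (2 * δ) := by
    have : 0 < (Real.exp ε - 1) / (2 * δ) := div_pos (by linarith) (by linarith)
    linarith
  have hlog : ε ≤ Real.log (1 + (Real.exp ε - 1) / (2 * δ)) := by
    rw [Real.le_log_iff_exp_le hpos]
    have : Real.exp ε - 1 ≤ (Real.exp ε - 1) / (2 * δ) := by
      rw [le_div_iff₀ (by linarith)]
      nlinarith
    linarith
  have hAl : A / lam = Real.log (1 + (Real.exp ε - 1) / (2 * δ)) := by
    rw [hA, hlam]; field_simp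
  have hDl : Δ / lam = ε := by rw [hlam]; field_simp
  have hAD : 0 ≤ A - Δ := by
    have h1 : Δ / lam ≤ A / lam := by rw [hAl, hDl]; exact hlog
    have := (div_le_div_iff_of_pos_right hl).mp h1
    linarith
  have hexp : Real.exp (-A / lam) = 2 * δ / (2 * δ + (Real.exp ε - 1)) := by
    rw [neg_div, Real.exp_neg, hAl, Real.exp_log hpos]
    field_simp
  have hexp2 : Real.exp (-(A - Δ) / lam) = Real.exp (-A / lam) * Real.exp ε := by
    rw [← Real.exp_add, ← hDl]
    congr 1
    ring
  have hcongr : ∫ x in (A - Δ)..A, f x = ∫ x in (A - Δ)..A, B * Real.exp (-x / lam) := by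
    apply intervalIntegral.integral_congr
    intro x hx
    rw [Set.uIcc_of_le (by linarith)] at hx
    have hx0 : 0 ≤ x := le_trans hAD hx.1
    have hm : x ∈ Set.Icc (-A) A := ⟨by linarith [hx.2], hx.2⟩
    simp only [hf, if_pos hm, abs_of_nonneg hx0]
  have hint : ∫ x in (A - Δ)..A, B * Real.exp (-x / lam)
      = -(B * lam) * Real.exp (-A / lam) - -(B * lam) * Real.exp (-(A - Δ) / lam) := by
    apply intervalIntegral.integral_eq_sub_of_hasDerivAt
      (f := fun x => -(B * lam) * Real.exp (-x / lam))
    · intro x _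
      have h0 : HasDerivAt (fun y : ℝ => -y / lam) (-1 / lam) x :=
        (hasDerivAt_id x).neg.div_const lam
      have h := h0.exp.const_mul (-(B * lam))
      have he : -(B * lam) * (Real.exp (-x / lam) * (-1 / lam)) = B * Real.exp (-x / lam) := by
        field_simp
      rw [he] at h
      exact h
    · apply Continuous.intervalIntegrable
      fun_prop
  rw [hcongr, hint, hexp2, hB, hexp]
  have h1 : 0 < Real.exp ε - 1 := by linarith
  have h2 : 0 < 2 * δ + (Real.exp ε - 1) := by linarith
  have h3 : 1 - 2 * δ / (2 * δ + (Real.exp ε - 1))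
      = (Real.exp ε - 1) / (2 * δ + (Real.exp ε - 1)) := by
    field_simp; ring
  rw [h3]
  generalize Real.exp ε = E at *
  have h1' := h1.ne'
  have h2' := h2.ne'
  field_simp
  ring
end

section
/- Let 0 < δ < 1/2, ε > 0, Δ > 0, and let P_TLap be the Borel probability measure on ℝ with density f(x) = B·e^{−|x|/λ} for x ∈ [−A, A] and f(x) = 0 otherwise, where λ = Δ/ε, A = (Δ/ε)·log(1 + (e^ε − 1)/(2δ)), B = 1/(2λ(1 − e^{−A/λ})). Then P_TLap satisfies the (ε,δ)-differential-privacy constraint with sensitivity Δ: for every real d with |d| ≤ Δ and every Borel set S ⊆ ℝ, P_TLap(S) ≤ e^ε · P_TLap(S + d) + δ. -/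
open MeasureTheory Real

/-- A Borel probability measure `P` on ℝ satisfies the (ε,δ)-differential-privacy
constraint with sensitivity `Δ` if for every `d` with `|d| ≤ Δ` and every Borel set `S`,
`P(S) ≤ e^ε · P(S + d) + δ`, where `S + d = {s + d : s ∈ S}`. -/
def SatisfiesDP (ε δ Δ : ℝ) (P : Measure ℝ) : Prop :=
  ∀ d : ℝ, |d| ≤ Δ → ∀ S : Set ℝ, MeasurableSet S →
    P S ≤ ENNReal.ofReal (Real.exp ε) * P ((fun s => s + d) '' S) + ENNReal.ofReal δ

/-- Integral bound for one exponential tail. -/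
theorem tail_lintegral (lam B k a b δ : ℝ) (hB : 0 ≤ B) (hab : a ≤ b) (hk : k ≠ 0)
    (h : B * ((Real.exp (k * b) - Real.exp (k * a)) / k) ≤ δ) :
    ∫⁻ x, (Set.Icc a b).indicator (fun x => ENNReal.ofReal (B * Real.exp (k * x))) x
      ≤ ENNReal.ofReal δ := by
  rw [lintegral_indicator measurableSet_Icc]
  have hc : Continuous (fun x : ℝ => B * Real.exp (k * x)) := by fun_prop
  rw [← ofReal_integral_eq_lintegral_ofReal (hc.integrableOn_Icc)
    (Filter.Eventually.of_forall fun x => by positivity)]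
  apply ENNReal.ofReal_le_ofReal
  rw [integral_Icc_eq_integral_Ioc, ← intervalIntegral.integral_of_le hab]
  have hd : ∀ x ∈ Set.uIcc a b,
      HasDerivAt (fun x => B * (Real.exp (k * x) / k)) (B * Real.exp (k * x)) x := by
    intro x _
    have h1 : HasDerivAt (fun x : ℝ => k * x) k x := by
      simpa using (hasDerivAt_id x).const_mul k
    have h2 := ((h1.exp).div_const k).const_mul B
    rwa [mul_div_assoc, div_self hk, mul_one] at h2
  rw [intervalIntegral.integral_eq_sub_of_hasDerivAt hd (hc.intervalIntegrable _ _)]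
  refine le_trans (le_of_eq ?_) h
  ring

/-- The truncated Laplacian mechanism preserves
(ε,δ)-differential privacy. -/
theorem truncatedLaplacian_satisfiesDP
    (ε δ Δ lam A B : ℝ) (f : ℝ → ℝ) (P : Measure ℝ)
    (hδ0 : 0 < δ) (hδ : δ < 1 / 2) (hε : 0 < ε) (hΔ : 0 < Δ)
    (hlam : lam = Δ / ε)
    (hA : A = (Δ / ε) * Real.log (1 + (Real.exp ε - 1) / (2 * δ)))
    (hB : B = 1 / (2 * lam * (1 - Real.exp (-A / lam))))
    (hf : ∀ x : ℝ, f x = if x ∈ Set.Icc (-A) A then B * Real.exp (-|x| / lam) else 0)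
    (hP : P = volume.withDensity (fun x => ENNReal.ofReal (f x))) :
    SatisfiesDP ε δ Δ P := by
  have hl : 0 < lam := by rw [hlam]; positivity
  have hle : Δ = lam * ε := by rw [hlam]; field_simp
  have he1 : 1 < Real.exp ε := Real.one_lt_exp_iff.mpr hε
  have hq : 0 < (Real.exp ε - 1) / (2 * δ) := div_pos (by linarith) (by linarith)
  have hE : Real.exp (A / lam) = 1 + (Real.exp ε - 1) / (2 * δ) := by
    rw [hA, ← hlam, mul_div_cancel_left₀ _ hl.ne', Real.exp_log (by linarith)]
  have hAΔ : Δ ≤ A := by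
    have h1 : Real.exp ε ≤ Real.exp (A / lam) := by
      rw [hE]
      have : Real.exp ε - 1 ≤ (Real.exp ε - 1) / (2 * δ) := by
        rw [le_div_iff₀ (by linarith)]
        nlinarith
      linarith
    have h2 := (le_div_iff₀ hl).mp (Real.exp_le_exp.mp h1)
    linarith [mul_comm ε lam]
  have hEm : Real.exp (-A / lam) = (1 + (Real.exp ε - 1) / (2 * δ))⁻¹ := by
    rw [neg_div, Real.exp_neg, hE]
  have hlt : Real.exp (-A / lam) < 1 := by
    rw [hEm]; exact inv_lt_one_of_one_lt₀ (by linarith)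
  have hB0 : 0 < B := by
    rw [hB]
    have : 0 < 1 - Real.exp (-A / lam) := by linarith
    positivity
  have hkey : B * lam * (Real.exp (-A / lam) * (Real.exp ε - 1)) = δ := by
    rw [hB, hEm]
    have h3 : Real.exp ε - 1 ≠ 0 := by linarith
    have h4 : 2 * δ + (Real.exp ε - 1) ≠ 0 := by linarith
    generalize Real.exp ε - 1 = t at *
    have h5 : 1 + t / (2 * δ) = (2 * δ + t) / (2 * δ) := by field_simp
    have h6 : 1 - ((2 * δ + t) / (2 * δ))⁻¹ = t / (2 * δ + t) := by
      rw [inv_div, eq_div_iff h4, sub_mul, div_mul_cancel₀ _ h4]; ring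
    rw [h5, h6, inv_div]
    field_simp
  intro d hd S hS
  -- the exceptional tail
  obtain ⟨h, hhm, hhi, hhb⟩ : ∃ h : ℝ → ENNReal, Measurable h ∧
      (∫⁻ x, h x ≤ ENNReal.ofReal δ) ∧
      ∀ x ∈ Set.Icc (-A) A, x + d ∉ Set.Icc (-A) A → ENNReal.ofReal (f x) ≤ h x := by
    have hd' := abs_le.mp hd
    rcases le_total 0 d with hd0 | hd0
    · refine ⟨(Set.Icc (A - Δ) A).indicator
        (fun x => ENNReal.ofReal (B * Real.exp ((-1 / lam) * x))), ?_, ?_, ?_⟩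
      · exact Measurable.indicator (by fun_prop) measurableSet_Icc
      · apply tail_lintegral lam B (-1 / lam) _ _ δ hB0.le (by linarith)
          (div_ne_zero (by norm_num) hl.ne')
        rw [← hkey]
        have e1 : -1 / lam * A = -A / lam := by ring
        have e2 : -1 / lam * (A - Δ) = -A / lam + ε := by rw [hle]; field_simp; ring
        rw [e1, e2, Real.exp_add]
        apply le_of_eq
        field_simp
        ring
      · intro x hx hxd
        have hx1 : A < x + d := by
          by_contra hc
          exact hxd ⟨by linarith [hx.1], by linarith⟩
        have hx0 : 0 ≤ x := by linarith
        rw [Set.indicator_of_mem (show x ∈ Set.Icc (A - Δ) A from ⟨by linarith, hx.2⟩),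
          hf, if_pos hx, abs_of_nonneg hx0]
        apply le_of_eq; congr 3; ring
    · refine ⟨(Set.Icc (-A) (-A + Δ)).indicator
        (fun x => ENNReal.ofReal (B * Real.exp ((1 / lam) * x))), ?_, ?_, ?_⟩
      · exact Measurable.indicator (by fun_prop) measurableSet_Icc
      · apply tail_lintegral lam B (1 / lam) _ _ δ hB0.le (by linarith)
          (div_ne_zero (by norm_num) hl.ne')
        rw [← hkey]
        have e1 : 1 / lam * (-A) = -A / lam := by ring
        have e2 : 1 / lam * (-A + Δ) = -A / lam + ε := by rw [hle]; field_simp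
        rw [e1, e2, Real.exp_add]
        apply le_of_eq
        field_simp
      · intro x hx hxd
        have hx1 : x + d < -A := by
          by_contra hc
          exact hxd ⟨by linarith, by linarith [hx.2]⟩
        have hx0 : x ≤ 0 := by linarith
        rw [Set.indicator_of_mem (show x ∈ Set.Icc (-A) (-A + Δ) from ⟨hx.1, by linarith⟩),
          hf, if_pos hx, abs_of_nonpos hx0]
        apply le_of_eq; congr 3; ring
  have hpt : ∀ x, ENNReal.ofReal (f x) ≤
      ENNReal.ofReal (Real.exp ε) * ENNReal.ofReal (f (x + d)) + h x := by
    intro x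
    by_cases hx : x ∈ Set.Icc (-A) A
    · by_cases hxd : x + d ∈ Set.Icc (-A) A
      · refine le_trans ?_ le_self_add
        rw [← ENNReal.ofReal_mul (Real.exp_pos _).le]
        apply ENNReal.ofReal_le_ofReal
        rw [hf, hf, if_pos hx, if_pos hxd, mul_left_comm, ← Real.exp_add]
        apply mul_le_mul_of_nonneg_left _ hB0.le
        apply Real.exp_le_exp.mpr
        have h1 : |x + d| ≤ |x| + lam * ε := by
          have := abs_add_le x d
          linarith
        rw [div_le_iff₀ hl, add_mul, div_mul_cancel₀ _ hl.ne']
        linarith [mul_comm ε lam]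
      · exact (hhb x hx hxd).trans le_add_self
    · rw [hf, if_neg hx]; simp
  have hfm : Measurable f := by
    have : f = fun x => if x ∈ Set.Icc (-A) A then B * Real.exp (-|x| / lam) else 0 := funext hf
    rw [this]
    exact Measurable.ite measurableSet_Icc (by fun_prop) measurable_const
  have hemb := measurableEmbedding_addRight d
  have hS' : MeasurableSet ((fun s => s + d) '' S) := hemb.measurableSet_image.mpr hS
  rw [hP, withDensity_apply _ hS, withDensity_apply _ hS',
    ← (measurePreserving_add_right volume d).setLIntegral_comp_emb hemb]
  calc _ ≤ ∫⁻ x in S, (ENNReal.ofReal (Real.exp ε) * ENNReal.ofReal (f (x + d)) + h x) :=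
        lintegral_mono hpt
    _ = ENNReal.ofReal (Real.exp ε) * (∫⁻ x in S, ENNReal.ofReal (f (x + d)))
        + ∫⁻ x in S, h x := by
        rw [lintegral_add_right _ hhm, lintegral_const_mul _ (by fun_prop)]
    _ ≤ _ := by
        gcongr
        exact (setLIntegral_le_lintegral _ _).trans hhi
end

section
/- Let 0 < δ < 1/2, ε > 0, Δ > 0, and let f be the truncated Laplacian density with parameters λ = Δ/ε, A = (Δ/ε)·log(1 + (e^ε − 1)/(2δ)), B = 1/(2λ(1 − e^{−A/λ})). Then the expected noise amplitude satisfies the exact identity ∫_ℝ |x|·f(x) dx = (Δ/ε)·(1 − log(1 + (e^ε − 1)/(2δ)) / ((e^ε − 1)/(2δ))). -/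
open MeasureTheory Real

/-- The expected noise amplitude of the truncated Laplacian density:
`∫ |x| f(x) dx = (Δ/ε)(1 − log(1 + (e^ε − 1)/(2δ)) / ((e^ε − 1)/(2δ)))`. -/
theorem truncatedLaplacian_noise_amplitude
    (ε δ Δ lam A B : ℝ) (f : ℝ → ℝ)
    (hδ0 : 0 < δ) (hδ : δ < 1 / 2) (hε : 0 < ε) (hΔ : 0 < Δ)
    (hlam : lam = Δ / ε)
    (hA : A = (Δ / ε) * Real.log (1 + (Real.exp ε - 1) / (2 * δ)))
    (hB : B = 1 / (2 * lam * (1 - Real.exp (-A / lam))))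
    (hf : ∀ x : ℝ, f x = if x ∈ Set.Icc (-A) A then B * Real.exp (-|x| / lam) else 0) :
    ∫ x : ℝ, |x| * f x
      = (Δ / ε) * (1 - Real.log (1 + (Real.exp ε - 1) / (2 * δ))
          / ((Real.exp ε - 1) / (2 * δ))) := by
  set t := (Real.exp ε - 1) / (2 * δ) with ht
  have ht0 : 0 < t := by
    have : 1 < Real.exp ε := Real.one_lt_exp_iff.mpr hε
    apply div_pos <;> linarith
  rw [← hlam] at hA ⊢
  have hl : 0 < lam := by rw [hlam]; positivity
  have hA0 : 0 ≤ A := by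
    rw [hA]
    exact mul_nonneg hl.le (Real.log_nonneg (by linarith))
  have hE : Real.exp (-A / lam) = 1 / (1 + t) := by
    have h1 : -A / lam = -Real.log (1 + t) := by
      rw [hA]; field_simp
    rw [h1, Real.exp_neg, Real.exp_log (by linarith), one_div]
  have hint : ∫ x in (0:ℝ)..A, x * (B * Real.exp (-x / lam))
      = B * (lam ^ 2 - lam * (A + lam) * Real.exp (-A / lam)) := by
    have hd : ∀ x ∈ Set.uIcc (0:ℝ) A,
        HasDerivAt (fun x : ℝ => B * (-(lam * (x + lam)) * Real.exp (-x / lam)))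
          (x * (B * Real.exp (-x / lam))) x := by
      intro x _
      have h1 : HasDerivAt (fun x : ℝ => Real.exp (-x / lam))
          (Real.exp (-x / lam) * (-1 / lam)) x :=
        (((hasDerivAt_id x).neg).div_const lam).exp
      have h2 : HasDerivAt (fun x : ℝ => -(lam * (x + lam))) (-(lam * 1)) x :=
        (((hasDerivAt_id x).add_const lam).const_mul lam).neg
      refine ((h2.mul h1).const_mul B).congr_deriv ?_
      field_simp
      ring
    rw [intervalIntegral.integral_eq_sub_of_hasDerivAt hd
      (Continuous.intervalIntegrable (by fun_prop) _ _)]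
    simp
    ring
  have key : ∫ x : ℝ, |x| * f x = 2 * ∫ x in Set.Ioi (0:ℝ),
      (Set.Iic A).indicator (fun x => x * (B * Real.exp (-x / lam))) x := by
    rw [← integral_comp_abs]
    congr 1
    funext x
    rw [hf x]
    simp only [Set.indicator, Set.mem_Icc, Set.mem_Iic, ← abs_le]
    split_ifs <;> simp
  rw [key, setIntegral_indicator measurableSet_Iic, Set.Ioi_inter_Iic,
    ← intervalIntegral.integral_of_le hA0, hint, hB, hE, hA]
  have h3 : 1 - 1 / (1 + t) = t / (1 + t) := by field_simp; ring
  rw [h3]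
  field_simp
  ring
end

section
/- Let 0 < δ < 1/2, ε > 0, Δ > 0. Then the minimum noise amplitude V_opt^{L1}(ε, δ, Δ) satisfies the upper bound V_opt^{L1}(ε, δ, Δ) ≤ (Δ/ε)·(1 − log(1 + (e^ε − 1)/(2δ)) / ((e^ε − 1)/(2δ))). -/
open MeasureTheory Real

/-- The minimum noise amplitude: the infimum of `∫ |x| dP(x)` over all Borel
probability measures `P` on ℝ satisfying the (ε,δ)-DP constraint with sensitivity Δ. -/
noncomputable def VoptL1 (ε δ Δ : ℝ) : ENNReal :=
  ⨅ (P : Measure ℝ) (_ : IsProbabilityMeasure P) (_ : SatisfiesDP ε δ Δ P),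
    ∫⁻ x : ℝ, ENNReal.ofReal |x| ∂P

/-- FTC on `Ioc` in `lintegral` form. -/
lemma lint_Ioc (a b : ℝ) (hab : a ≤ b) (F f : ℝ → ℝ) (hF : ∀ x, HasDerivAt F (f x) x)
    (hf : Continuous f) (h0 : ∀ x ∈ Set.Ioc a b, 0 ≤ f x) :
    ∫⁻ x in Set.Ioc a b, ENNReal.ofReal (f x) = ENNReal.ofReal (F b - F a) := by
  rw [← ofReal_integral_eq_lintegral_ofReal]
  · rw [← intervalIntegral.integral_of_le hab,
      intervalIntegral.integral_eq_sub_of_hasDerivAt (fun x _ => hF x)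
        (hf.intervalIntegrable a b)]
  · exact (hf.intervalIntegrable a b).1
  · exact (ae_restrict_iff' measurableSet_Ioc).2 (Filter.Eventually.of_forall h0)

/-- Lebesgue integral of an even function supported on `[-A, A]`. -/
lemma lint_even (A : ℝ) (hA : 0 ≤ A) (F f : ℝ → ℝ) (hF : ∀ x, HasDerivAt F (f x) x)
    (hf : Continuous f) (h0 : ∀ x, 0 ≤ x → 0 ≤ f x) :
    ∫⁻ x : ℝ, ENNReal.ofReal (if |x| ≤ A then f |x| else 0)
      = ENNReal.ofReal (2 * (F A - F 0)) := by
  have key : ∫⁻ x in Set.Ioi (0:ℝ), ENNReal.ofReal (if |x| ≤ A then f |x| else 0)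
      = ENNReal.ofReal (F A - F 0) := by
    rw [← lint_Ioc 0 A hA F f hF hf (fun x hx => h0 x hx.1.le),
      ← lintegral_indicator measurableSet_Ioi, ← lintegral_indicator measurableSet_Ioc]
    congr 1
    ext x
    by_cases h1 : 0 < x
    · by_cases h2 : x ≤ A <;> simp [Set.indicator, h1, h2, abs_of_pos h1]
    · simp [Set.indicator, h1]
  have key2 : ∫⁻ x in Set.Iic (0:ℝ), ENNReal.ofReal (if |x| ≤ A then f |x| else 0)
      = ENNReal.ofReal (F A - F 0) := by
    rw [← key, ← restrict_Iio_eq_restrict_Iic, ← lintegral_indicator measurableSet_Ioi,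
      ← lintegral_indicator measurableSet_Iio,
      ← lintegral_neg_eq_self]
    congr 1
    ext x
    simp [Set.indicator]
  have hpos : 0 ≤ F A - F 0 := by
    rw [← intervalIntegral.integral_eq_sub_of_hasDerivAt (fun x _ => hF x)
        (hf.intervalIntegrable 0 A)]
    exact intervalIntegral.integral_nonneg hA (fun x hx => h0 x hx.1)
  rw [← lintegral_add_compl _ (measurableSet_Ioi (a := (0:ℝ))), Set.compl_Ioi, key, key2,
    ← ENNReal.ofReal_add hpos hpos, two_mul]

/-- truncated Laplace density -/
noncomputable def tlap (l A B : ℝ) (x : ℝ) : ℝ := if |x| ≤ A then B * Real.exp (-|x| / l) else 0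

lemma tlap_meas (l A B : ℝ) : Measurable (tlap l A B) := by
  unfold tlap
  refine Measurable.ite (measurableSet_le (by fun_prop) (by fun_prop)) (by fun_prop) (by fun_prop)

lemma tlap_nonneg (l A B : ℝ) (hB : 0 ≤ B) (x : ℝ) : 0 ≤ tlap l A B x := by
  unfold tlap; split_ifs <;> positivity

lemma tlap_tail (l A B D d : ℝ) (hl : 0 < l) (hB : 0 ≤ B) (hd : |d| ≤ D) :
    ∫⁻ x in {x : ℝ | |x + d| ≤ A}ᶜ, ENNReal.ofReal (tlap l A B x)
      ≤ ENNReal.ofReal (B * l * (Real.exp (-(A - D) / l) - Real.exp (-A / l))) := by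
  have hD : 0 ≤ D := (abs_nonneg d).trans hd
  have hm : MeasurableSet {x : ℝ | |x + d| ≤ A}ᶜ :=
    (measurableSet_le (by fun_prop) (by fun_prop)).compl
  obtain ⟨hd1, hd2⟩ := abs_le.1 hd
  have main : ∫⁻ x in Set.Ioc (A - D) A, ENNReal.ofReal (B * Real.exp (-x / l))
      = ENNReal.ofReal (B * l * (Real.exp (-(A - D) / l) - Real.exp (-A / l))) := by
    rw [lint_Ioc (A - D) A (by linarith) (fun x => -(B * l) * Real.exp (-x / l))
      (fun x => B * Real.exp (-x / l)) _ (by fun_prop) (fun x _ => by positivity)]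
    · congr 1; ring
    · intro x
      have := (((hasDerivAt_id x).neg.div_const l).exp).const_mul (-(B * l))
      refine this.congr_deriv ?_
      simp only [Pi.neg_apply, id]
      field_simp
  rcases le_total 0 d with h | h
  · rw [← main, ← lintegral_indicator hm, ← lintegral_indicator measurableSet_Ioc]
    refine lintegral_mono fun x => ?_
    by_cases hx : |x| ≤ A
    · by_cases hxd : |x + d| ≤ A
      · simp [Set.indicator, hxd]
      · have h1 := abs_le.1 hx
        have h2 : A < x + d := by
          by_contra hc
          exact hxd (abs_le.2 ⟨by linarith, by linarith⟩)
        have h3 : x ∈ Set.Ioc (A - D) A := ⟨by linarith, h1.2⟩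
        rw [Set.indicator_of_mem h3, Set.indicator_of_mem (by exact hxd)]
        apply ENNReal.ofReal_le_ofReal
        simp only [tlap, if_pos hx]
        have := le_abs_self x
        gcongr
    · simp [Set.indicator, tlap, hx]
  · rw [← main, ← lintegral_indicator hm, ← lintegral_indicator measurableSet_Ioc,
      ← lintegral_neg_eq_self]
    refine lintegral_mono fun x => ?_
    by_cases hx : |x| ≤ A
    · by_cases hxd : |-x + d| ≤ A
      · simp [Set.indicator, hxd]
      · have h1 := abs_le.1 hx
        have h2 : A < x - d := by
          by_contra hc
          exact hxd (abs_le.2 ⟨by linarith, by linarith⟩)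
        have h3 : x ∈ Set.Ioc (A - D) A := ⟨by linarith, h1.2⟩
        rw [Set.indicator_of_mem h3, Set.indicator_of_mem (by exact hxd)]
        apply ENNReal.ofReal_le_ofReal
        simp only [tlap, abs_neg, if_pos hx]
        have := le_abs_self x
        gcongr
    · simp [Set.indicator, tlap, hx]

lemma tlap_dp (ε δ l A B D : ℝ) (hl : 0 < l) (hB : 0 ≤ B) (hD : D / l = ε)
    (hδ : B * l * (Real.exp (-(A - D) / l) - Real.exp (-A / l)) = δ) :
    SatisfiesDP ε δ D (volume.withDensity fun x => ENNReal.ofReal (tlap l A B x)) := by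
  intro d hd S hS
  have hfm : Measurable fun x => ENNReal.ofReal (tlap l A B x) := (tlap_meas l A B).ennreal_ofReal
  have hsm : Measurable fun x => ENNReal.ofReal (tlap l A B (x + d)) :=
    hfm.comp (measurable_add_const d)
  have hT : MeasurableSet {x : ℝ | |x + d| ≤ A} := measurableSet_le (by fun_prop) (by fun_prop)
  have himg : MeasurableSet ((fun s => s + d) '' S) :=
    (MeasurableEquiv.addRight d).measurableSet_image.2 hS
  have hshift : (volume.withDensity fun x => ENNReal.ofReal (tlap l A B x)) ((fun s => s + d) '' S)
      = ∫⁻ x in S, ENNReal.ofReal (tlap l A B (x + d)) := by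
    rw [withDensity_apply _ himg, ← lintegral_indicator himg, ← lintegral_indicator hS,
      ← lintegral_add_right_eq_self _ d]
    congr 1
    ext x
    have hiff : x + d ∈ (fun s => s + d) '' S ↔ x ∈ S :=
      (add_left_injective d).mem_set_image (a := x) (s := S)
    by_cases hx : x ∈ S
    · rw [Set.indicator_of_mem hx, Set.indicator_of_mem (hiff.2 hx)]
    · rw [Set.indicator_of_notMem hx, Set.indicator_of_notMem (fun h => hx (hiff.1 h))]
  rw [hshift, ← measure_inter_add_sdiff S hT]
  gcongr ?_ + ?_
  · rw [withDensity_apply _ (hS.inter hT), ← lintegral_const_mul _ hsm]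
    refine (setLIntegral_mono' (hS.inter hT) ?_).trans (lintegral_mono_set Set.inter_subset_left)
    intro x hx
    have hx2 : |x + d| ≤ A := hx.2
    show _ ≤ ENNReal.ofReal (Real.exp ε) * ENNReal.ofReal (tlap l A B (x + d))
    rw [← ENNReal.ofReal_mul (Real.exp_pos _).le]
    apply ENNReal.ofReal_le_ofReal
    by_cases hxA : |x| ≤ A
    · simp only [tlap, if_pos hx2, if_pos hxA]
      rw [mul_left_comm, ← Real.exp_add, ← hD, ← add_div]
      have := abs_add_le x d
      gcongr
      linarith
    · rw [tlap, if_neg hxA]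
      exact mul_nonneg (Real.exp_pos _).le (tlap_nonneg _ _ _ hB _)
  · rw [← hδ]
    refine le_trans (measure_mono (Set.sdiff_subset_compl _ _)) ?_
    rw [withDensity_apply _ hT.compl]
    exact tlap_tail l A B D d hl hB hd

/-- Upper bound on the minimum noise amplitude achieved by the
truncated Laplacian mechanism:
`V_opt^{L1}(ε, δ, Δ) ≤ (Δ/ε)(1 − log(1 + (e^ε − 1)/(2δ)) / ((e^ε − 1)/(2δ)))`. -/
theorem VoptL1_upper_bound
    (ε δ Δ : ℝ) (hδ0 : 0 < δ) (hδ : δ < 1 / 2) (hε : 0 < ε) (hΔ : 0 < Δ) :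
    VoptL1 ε δ Δ
      ≤ ENNReal.ofReal ((Δ / ε) * (1 - Real.log (1 + (Real.exp ε - 1) / (2 * δ))
          / ((Real.exp ε - 1) / (2 * δ)))) := by
  have he : 0 < Real.exp ε - 1 := by linarith [Real.add_one_lt_exp hε.ne']
  obtain ⟨u, hu⟩ : ∃ u, u = (Real.exp ε - 1) / (2 * δ) := ⟨_, rfl⟩
  have hu0 : 0 < u := by rw [hu]; positivity
  rw [← hu]
  obtain ⟨l, hl⟩ : ∃ l, l = Δ / ε := ⟨_, rfl⟩
  have hl0 : 0 < l := by rw [hl]; positivity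
  rw [← hl]
  obtain ⟨L, hL⟩ : ∃ L, L = Real.log (1 + u) := ⟨_, rfl⟩
  have hL0 : 0 ≤ L := by rw [hL]; exact Real.log_nonneg (by linarith)
  have hexpL : Real.exp (-(l * L) / l) = 1 / (1 + u) := by
    rw [show -(l * L) / l = -L by field_simp, Real.exp_neg, hL, Real.exp_log (by linarith), one_div]
  have hDl : Δ / l = ε := by rw [hl]; field_simp
  rw [← hL]
  have hB0 : 0 ≤ (1 + u) / (2 * l * u) := by positivity
  have hdp := tlap_dp ε δ l (l * L) ((1 + u) / (2 * l * u)) Δ hl0 hB0 hDl (by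
    rw [show -(l * L - Δ) / l = Δ / l + -(l * L) / l by ring, Real.exp_add, hexpL, hDl]
    have : Real.exp ε = 1 + 2 * δ * u := by rw [hu]; field_simp; ring
    rw [this]
    field_simp
    ring)
  have hA0 : 0 ≤ l * L := by positivity
  have hder : ∀ x : ℝ, HasDerivAt (fun x => Real.exp (-x / l)) (Real.exp (-x / l) * (-1 / l)) x :=
    fun x => ((hasDerivAt_id x).neg.div_const l).exp
  have hprob : IsProbabilityMeasure
      (volume.withDensity fun x => ENNReal.ofReal (tlap l (l * L) ((1 + u) / (2 * l * u)) x)) := by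
    constructor
    rw [withDensity_apply _ MeasurableSet.univ, Measure.restrict_univ]
    unfold tlap
    rw [lint_even (l * L) hA0 (fun x => -((1 + u) / (2 * l * u) * l) * Real.exp (-x / l))
      (fun x => (1 + u) / (2 * l * u) * Real.exp (-x / l)) _ (by fun_prop)
      (fun x _ => by positivity)]
    · simp only [hexpL]
      rw [← ENNReal.ofReal_one]
      congr 1
      simp only [neg_zero, zero_div, Real.exp_zero]
      field_simp
      ring
    · intro x
      refine ((hder x).const_mul (-((1 + u) / (2 * l * u) * l))).congr_deriv ?_
      field_simp
  have hval : ∫⁻ x : ℝ, ENNReal.ofReal |x|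
      ∂(volume.withDensity fun x => ENNReal.ofReal (tlap l (l * L) ((1 + u) / (2 * l * u)) x))
      = ENNReal.ofReal (l * (1 - L / u)) := by
    rw [lintegral_withDensity_eq_lintegral_mul _ (tlap_meas _ _ _).ennreal_ofReal (by fun_prop)]
    have : ∀ x : ℝ, ((fun x => ENNReal.ofReal (tlap l (l * L) ((1 + u) / (2 * l * u)) x)) *
        fun x => ENNReal.ofReal |x|) x = ENNReal.ofReal (if |x| ≤ l * L then
          (fun y => (1 + u) / (2 * l * u) * (y * Real.exp (-y / l))) |x| else 0) := by
      intro x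
      simp only [Pi.mul_apply]
      rw [← ENNReal.ofReal_mul (tlap_nonneg _ _ _ hB0 _)]
      congr 1
      unfold tlap
      split_ifs <;> ring
    simp_rw [this]
    rw [lint_even (l * L) hA0
      (fun x => -((1 + u) / (2 * l * u) * l) * ((x + l) * Real.exp (-x / l)))
      (fun y => (1 + u) / (2 * l * u) * (y * Real.exp (-y / l))) _ (by fun_prop)
      (fun x hx => by positivity)]
    · simp only [hexpL]
      congr 1
      simp only [neg_zero, zero_div, Real.exp_zero]
      field_simp
      ring
    · intro x
      refine ((((hasDerivAt_id x).add_const l).mul (hder x)).const_mul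
        (-((1 + u) / (2 * l * u) * l))).congr_deriv ?_
      simp only [id]
      field_simp
      ring
  rw [← hval]
  exact iInf_le_of_le _ (iInf_le_of_le hprob (iInf_le_of_le hdp le_rfl))
end

section
/- Let 0 < δ < 1/2, ε > 0, Δ > 0, and let f be the truncated Laplacian density with parameters λ = Δ/ε, A = (Δ/ε)·log(1 + (e^ε − 1)/(2δ)), B = 1/(2λ(1 − e^{−A/λ})). Then the expected noise power satisfies the exact identity ∫_ℝ x²·f(x) dx = (2Δ²/ε²)·(1 − ((1/2)·log²(1 + (e^ε − 1)/(2δ)) + log(1 + (e^ε − 1)/(2δ))) / ((e^ε − 1)/(2δ))). -/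
open MeasureTheory Real

/-- The expected noise power of the truncated Laplacian density:
`∫ x² f(x) dx = (2Δ²/ε²)(1 − ((1/2)log²(1 + (e^ε−1)/(2δ)) + log(1 + (e^ε−1)/(2δ)))
  / ((e^ε−1)/(2δ)))`. -/
theorem truncatedLaplacian_noise_power
    (ε δ Δ lam A B : ℝ) (f : ℝ → ℝ)
    (hδ0 : 0 < δ) (hδ : δ < 1 / 2) (hε : 0 < ε) (hΔ : 0 < Δ)
    (hlam : lam = Δ / ε)
    (hA : A = (Δ / ε) * Real.log (1 + (Real.exp ε - 1) / (2 * δ)))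
    (hB : B = 1 / (2 * lam * (1 - Real.exp (-A / lam))))
    (hf : ∀ x : ℝ, f x = if x ∈ Set.Icc (-A) A then B * Real.exp (-|x| / lam) else 0) :
    ∫ x : ℝ, x ^ 2 * f x
      = (2 * Δ ^ 2 / ε ^ 2) * (1 -
          ((1 / 2) * (Real.log (1 + (Real.exp ε - 1) / (2 * δ))) ^ 2
            + Real.log (1 + (Real.exp ε - 1) / (2 * δ)))
          / ((Real.exp ε - 1) / (2 * δ))) := by
  set k : ℝ := (Real.exp ε - 1) / (2 * δ) with hk
  have hk0 : 0 < k := by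
    have : 1 < Real.exp ε := Real.one_lt_exp_iff.mpr hε
    apply div_pos <;> linarith
  set L : ℝ := Real.log (1 + k) with hL
  have hL0 : 0 < L := Real.log_pos (by linarith)
  have hlam0 : 0 < lam := by rw [hlam]; positivity
  have hA' : A = lam * L := by rw [hA, hlam]
  have hA0 : 0 < A := by rw [hA']; positivity
  have hexp : Real.exp (-A / lam) = 1 / (1 + k) := by
    have h1 : -A / lam = -L := by rw [hA']; field_simp
    rw [h1, Real.exp_neg, hL, Real.exp_log (by linarith), one_div]
  let g : ℝ → ℝ := (Set.Iic A).indicator (fun x => x ^ 2 * (B * Real.exp (-x / lam)))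
  have hfg : (fun x : ℝ => x ^ 2 * f x) = fun x => g |x| := by
    funext x
    simp only [g, Set.indicator_apply, hf, Set.mem_Icc, Set.mem_Iic, ← abs_le, sq_abs]
    split_ifs <;> simp
  have hI : ∫ x in (0 : ℝ)..A, x ^ 2 * (B * Real.exp (-x / lam))
      = B * lam ^ 3 * (2 - Real.exp (-A / lam) * (L ^ 2 + 2 * L + 2)) := by
    have hd : ∀ x ∈ Set.uIcc (0 : ℝ) A, HasDerivAt
        (fun x : ℝ => -(B * (lam * x ^ 2 + 2 * lam ^ 2 * x + 2 * lam ^ 3)) * Real.exp (-x / lam))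
        (x ^ 2 * (B * Real.exp (-x / lam))) x := by
      intro x _
      have h1 : HasDerivAt (fun x : ℝ => Real.exp (-x / lam))
          (Real.exp (-x / lam) * (-1 / lam)) x :=
        (((hasDerivAt_id x).neg).div_const lam).exp
      have h2 : HasDerivAt (fun x : ℝ => -(B * (lam * x ^ 2 + 2 * lam ^ 2 * x + 2 * lam ^ 3)))
          (-(B * (lam * (2 * x) + 2 * lam ^ 2 * 1))) x := by
        have h3 : HasDerivAt (fun x : ℝ => x ^ 2) (2 * x) x := by
          simpa using hasDerivAt_pow 2 x
        exact ((((h3.const_mul lam).add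
          ((hasDerivAt_id x).const_mul (2 * lam ^ 2))).add_const _).const_mul B).neg
      refine (h2.mul h1).congr_deriv ?_
      field_simp
      ring
    rw [intervalIntegral.integral_eq_sub_of_hasDerivAt hd
      (Continuous.intervalIntegrable (by fun_prop) _ _)]
    simp only [neg_zero, zero_div, Real.exp_zero]
    rw [hA']
    ring
  rw [hfg, integral_comp_abs]
  simp only [g]
  rw [setIntegral_indicator measurableSet_Iic, Set.Ioi_inter_Iic,
    ← intervalIntegral.integral_of_le hA0.le, hI, hB, hexp]
  have h2 : 2 * Δ ^ 2 / ε ^ 2 = 2 * lam ^ 2 := by rw [hlam]; ring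
  have h3 : 1 - 1 / (1 + k) = k / (1 + k) := by field_simp; ring
  rw [h2, h3]
  have : 1 + k ≠ 0 := by positivity
  field_simp
  ring
end

section
/- Let 0 < δ < 1/2, ε > 0, Δ > 0. Then the minimum noise power V_opt^{L2}(ε, δ, Δ) satisfies the upper bound V_opt^{L2}(ε, δ, Δ) ≤ (2Δ²/ε²)·(1 − ((1/2)·log²(1 + (e^ε − 1)/(2δ)) + log(1 + (e^ε − 1)/(2δ))) / ((e^ε − 1)/(2δ))). -/
open MeasureTheory Real

/-- The minimum noise power: the infimum of `∫ x² dP(x)` over all Borel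
probability measures `P` on ℝ satisfying the (ε,δ)-DP constraint with sensitivity Δ. -/
noncomputable def VoptL2 (ε δ Δ : ℝ) : ENNReal :=
  ⨅ (P : Measure ℝ) (_ : IsProbabilityMeasure P) (_ : SatisfiesDP ε δ Δ P),
    ∫⁻ x : ℝ, ENNReal.ofReal (x ^ 2) ∂P

lemma tl_lint {F f : ℝ → ℝ} {a b : ℝ} (hab : a ≤ b) (hF : ∀ x, HasDerivAt F (f x) x)
    (hf : Continuous f) (h0 : ∀ x ∈ Set.Icc a b, 0 ≤ f x) :
    ∫⁻ x in Set.Icc a b, ENNReal.ofReal (f x) = ENNReal.ofReal (F b - F a) := by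
  rw [← ofReal_integral_eq_lintegral_ofReal hf.continuousOn.integrableOn_Icc
    ((ae_restrict_iff' measurableSet_Icc).2 (Filter.Eventually.of_forall h0)),
    integral_Icc_eq_integral_Ioc, ← intervalIntegral.integral_of_le hab,
    intervalIntegral.integral_eq_sub_of_hasDerivAt (fun x _ => hF x) (hf.intervalIntegrable _ _)]

lemma tl_sym {F f : ℝ → ℝ} {a : ℝ} (ha : 0 ≤ a) (hF : ∀ x, HasDerivAt F (f x) x)
    (hf : Continuous f) (h0 : ∀ x, 0 ≤ f x) :
    ∫⁻ x in Set.Icc (-a) a, ENNReal.ofReal (f |x|) = ENNReal.ofReal (2 * (F a - F 0)) := by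
  have hc : Continuous (fun x : ℝ => f |x|) := hf.comp continuous_abs
  rw [← ofReal_integral_eq_lintegral_ofReal hc.continuousOn.integrableOn_Icc
    (Filter.Eventually.of_forall fun x => h0 _),
    integral_Icc_eq_integral_Ioc, ← intervalIntegral.integral_of_le (by linarith),
    ← intervalIntegral.integral_add_adjacent_intervals (b := 0)
      (hc.intervalIntegrable _ _) (hc.intervalIntegrable _ _)]
  have h1 : ∫ x in (0:ℝ)..a, f |x| = F a - F 0 := by
    rw [← intervalIntegral.integral_eq_sub_of_hasDerivAt (fun x _ => hF x)
      (hf.intervalIntegrable 0 a)]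
    refine intervalIntegral.integral_congr fun x hx => ?_
    rw [Set.uIcc_of_le ha] at hx
    simp only [abs_of_nonneg hx.1]
  have h2 : ∫ x in (-a)..0, f |x| = F a - F 0 := by
    rw [← h1]
    have := intervalIntegral.integral_comp_neg (a := -a) (b := 0) (fun x : ℝ => f |x|)
    simpa using this
  rw [h1, h2]
  congr 1
  ring

lemma tl_exp (l x : ℝ) : HasDerivAt (fun y : ℝ => Real.exp (-y / l)) (Real.exp (-x / l) * (-1 / l)) x :=
  ((hasDerivAt_id x).neg.div_const l).exp

/-- Density of the truncated Laplacian. -/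
noncomputable def tlDens (B l A : ℝ) : ℝ → ENNReal :=
  (Set.Icc (-A) A).indicator fun x => ENNReal.ofReal (B * Real.exp (-|x| / l))

lemma tlDens_meas (B l A : ℝ) : Measurable (tlDens B l A) := by
  refine Measurable.indicator ?_ measurableSet_Icc
  fun_prop

lemma tl_mass {B l A : ℝ} (hB : 0 ≤ B) (hl : 0 < l) (hA : 0 ≤ A) :
    ∫⁻ x, tlDens B l A x = ENNReal.ofReal (2 * (B * l * (1 - Real.exp (-A / l)))) := by
  unfold tlDens
  rw [lintegral_indicator measurableSet_Icc,
    tl_sym (F := fun x => -(B * l) * Real.exp (-x / l)) (f := fun x => B * Real.exp (-x / l)) hA]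
  · congr 1
    simp
    ring
  · intro x
    refine ((tl_exp l x).const_mul (-(B * l))).congr_deriv ?_
    field_simp
  · fun_prop
  · intro x; positivity

lemma tl_second {B l A : ℝ} (hB : 0 ≤ B) (hl : 0 < l) (hA : 0 ≤ A) :
    ∫⁻ x, tlDens B l A x * ENNReal.ofReal (x ^ 2) =
      ENNReal.ofReal (2 * (B * l *
        (2 * l ^ 2 - Real.exp (-A / l) * (A ^ 2 + 2 * l * A + 2 * l ^ 2)))) := by
  have : ∀ x, tlDens B l A x * ENNReal.ofReal (x ^ 2) = (Set.Icc (-A) A).indicator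
      (fun x => ENNReal.ofReal ((fun y : ℝ => B * Real.exp (-y / l) * y ^ 2) |x|)) x := by
    intro x
    unfold tlDens
    by_cases hx : x ∈ Set.Icc (-A) A
    · simp only [Set.indicator_of_mem hx, sq_abs]
      rw [← ENNReal.ofReal_mul (by positivity)]
    · simp only [Set.indicator_of_notMem hx, zero_mul]
  simp_rw [this]
  rw [lintegral_indicator measurableSet_Icc,
    tl_sym (F := fun x => -(B * l) * (Real.exp (-x / l) * (x ^ 2 + 2 * l * x + 2 * l ^ 2)))
      (f := fun y : ℝ => B * Real.exp (-y / l) * y ^ 2) hA]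
  · congr 1
    simp
    ring
  · intro x
    have h := (((hasDerivAt_id x).pow 2).add ((hasDerivAt_id x).const_mul (2 * l))).add_const
      (2 * l ^ 2)
    refine (((tl_exp l x).mul h).const_mul (-(B * l))).congr_deriv ?_
    simp
    field_simp
    ring
  · fun_prop
  · intro x; positivity

lemma tl_right {B l a b : ℝ} (hB : 0 ≤ B) (hl : 0 < l) (hab : a ≤ b) :
    ∫⁻ x in Set.Icc a b, ENNReal.ofReal (B * Real.exp (-x / l)) =
      ENNReal.ofReal (B * l * (Real.exp (-a / l) - Real.exp (-b / l))) := by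
  rw [tl_lint (F := fun x => -(B * l) * Real.exp (-x / l)) hab]
  · congr 1
    ring
  · intro x
    refine ((tl_exp l x).const_mul (-(B * l))).congr_deriv ?_
    field_simp
  · fun_prop
  · intro x _; positivity

lemma tl_left {B l a b : ℝ} (hB : 0 ≤ B) (hl : 0 < l) (hab : a ≤ b) :
    ∫⁻ x in Set.Icc (-b) (-a), ENNReal.ofReal (B * Real.exp (x / l)) =
      ENNReal.ofReal (B * l * (Real.exp (-a / l) - Real.exp (-b / l))) := by
  rw [tl_lint (F := fun x => (B * l) * Real.exp (x / l)) (by linarith : -b ≤ -a)]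
  · congr 1
    ring
  · intro x
    refine ((((hasDerivAt_id x).div_const l).exp).const_mul (B * l)).congr_deriv ?_
    simp only [id]
    field_simp
  · fun_prop
  · intro x _; positivity

lemma tl_ratio {B l D ε x d : ℝ} (hB : 0 ≤ B) (hl : 0 < l) (hD : D / l = ε) (hd : |d| ≤ D) :
    ENNReal.ofReal (B * Real.exp (-|x| / l)) ≤
      ENNReal.ofReal (Real.exp ε) * ENNReal.ofReal (B * Real.exp (-|x + d| / l)) := by
  rw [← ENNReal.ofReal_mul (Real.exp_pos _).le]
  apply ENNReal.ofReal_le_ofReal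
  rw [mul_left_comm, ← Real.exp_add, ← hD, ← add_div]
  gcongr
  have := abs_sub_abs_le_abs_sub (x + d) x
  rw [add_sub_cancel_left] at this
  linarith

lemma tl_dp {B l A D ε δ : ℝ} (hB : 0 ≤ B) (hl : 0 < l) (hD0 : 0 ≤ D)
    (hD : D / l = ε)
    (hδ : B * l * (Real.exp (-(A - D) / l) - Real.exp (-A / l)) = δ) :
    SatisfiesDP ε δ D (volume.withDensity (tlDens B l A)) := by
  intro d hd S hS
  have key : ∃ h : ℝ → ENNReal, Measurable h ∧ ∫⁻ x, h x = ENNReal.ofReal δ ∧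
      ∀ x, tlDens B l A x ≤ ENNReal.ofReal (Real.exp ε) * tlDens B l A (x + d) + h x := by
    have hd' := abs_le.1 hd
    rcases le_total 0 d with h0 | h0
    · refine ⟨(Set.Icc (A - D) A).indicator fun x => ENNReal.ofReal (B * Real.exp (-x / l)),
        Measurable.indicator (by fun_prop) measurableSet_Icc, ?_, ?_⟩
      · rw [lintegral_indicator measurableSet_Icc, tl_right hB hl (by linarith), hδ]
      · intro x
        unfold tlDens
        by_cases hx : x ∈ Set.Icc (-A) A
        · by_cases hy : x + d ∈ Set.Icc (-A) A
          · rw [Set.indicator_of_mem hx, Set.indicator_of_mem hy]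
            exact (tl_ratio hB hl hD hd).trans le_self_add
          · have hz : x ∈ Set.Icc (A - D) A := by
              refine ⟨?_, hx.2⟩
              by_contra hc
              exact hy ⟨by linarith [hx.1], by linarith⟩
            rw [Set.indicator_of_mem hx, Set.indicator_of_mem hz]
            refine le_trans (ENNReal.ofReal_le_ofReal ?_) le_add_self
            gcongr
            exact le_abs_self x
        · rw [Set.indicator_of_notMem hx]; exact zero_le
    · refine ⟨(Set.Icc (-A) (-(A - D))).indicator fun x => ENNReal.ofReal (B * Real.exp (x / l)),
        Measurable.indicator (by fun_prop) measurableSet_Icc, ?_, ?_⟩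
      · rw [lintegral_indicator measurableSet_Icc, tl_left hB hl (by linarith), hδ]
      · intro x
        unfold tlDens
        by_cases hx : x ∈ Set.Icc (-A) A
        · by_cases hy : x + d ∈ Set.Icc (-A) A
          · rw [Set.indicator_of_mem hx, Set.indicator_of_mem hy]
            exact (tl_ratio hB hl hD hd).trans le_self_add
          · have hz : x ∈ Set.Icc (-A) (-(A - D)) := by
              refine ⟨hx.1, ?_⟩
              by_contra hc
              exact hy ⟨by linarith, by linarith [hx.2]⟩
            rw [Set.indicator_of_mem hx, Set.indicator_of_mem hz]
            refine le_trans (ENNReal.ofReal_le_ofReal ?_) le_add_self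
            gcongr
            linarith [neg_abs_le x]
        · rw [Set.indicator_of_notMem hx]; exact zero_le
  obtain ⟨h, hm, hi, hp⟩ := key
  have hS' : MeasurableSet ((fun s => s + d) '' S) :=
    (MeasurableEquiv.addRight d).measurableEmbedding.measurableSet_image.2 hS
  rw [withDensity_apply _ hS, withDensity_apply _ hS',
    ← (measurePreserving_add_right volume d).setLIntegral_comp_emb
      (MeasurableEquiv.addRight d).measurableEmbedding, ← hi]
  have hg := tlDens_meas B l A
  calc ∫⁻ x in S, tlDens B l A x
      ≤ ∫⁻ x in S, (ENNReal.ofReal (Real.exp ε) * tlDens B l A (x + d) + h x) :=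
        lintegral_mono hp
    _ = ENNReal.ofReal (Real.exp ε) * (∫⁻ x in S, tlDens B l A (x + d)) + ∫⁻ x in S, h x := by
        rw [lintegral_add_right _ hm, lintegral_const_mul _ (by fun_prop)]
    _ ≤ _ := by
        exact add_le_add le_rfl (setLIntegral_le_lintegral _ _)

/-- Upper bound on the minimum noise power achieved by the
truncated Laplacian mechanism. -/
theorem VoptL2_upper_bound
    (ε δ Δ : ℝ) (hδ0 : 0 < δ) (hδ : δ < 1 / 2) (hε : 0 < ε) (hΔ : 0 < Δ) :
    VoptL2 ε δ Δ
      ≤ ENNReal.ofReal ((2 * Δ ^ 2 / ε ^ 2) * (1 -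
          ((1 / 2) * (Real.log (1 + (Real.exp ε - 1) / (2 * δ))) ^ 2
            + Real.log (1 + (Real.exp ε - 1) / (2 * δ)))
          / ((Real.exp ε - 1) / (2 * δ)))) := by
  set u := (Real.exp ε - 1) / (2 * δ) with hu
  have hE : 0 < Real.exp ε - 1 := by linarith [Real.add_one_lt_exp hε.ne']
  have hu0 : 0 < u := by positivity
  set L := Real.log (1 + u) with hL
  have hL0 : 0 ≤ L := Real.log_nonneg (by linarith)
  have heL : Real.exp (-L) = 1 / (1 + u) := by
    rw [Real.exp_neg, hL, Real.exp_log (by linarith), one_div]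
  have hl : 0 < Δ / ε := by positivity
  obtain ⟨l, hl'⟩ : ∃ l, l = Δ / ε := ⟨_, rfl⟩
  rw [← hl'] at hl
  have hD : Δ / l = ε := by rw [hl']; field_simp
  have hB : 0 ≤ (1 + u) / (2 * l * u) := by positivity
  have hA : 0 ≤ l * L := by positivity
  have e1 : -(l * L) / l = -L := by field_simp
  have e2 : -(l * L - Δ) / l = -L + ε := by rw [← hD]; field_simp; ring
  have hu1 : 1 + u ≠ 0 := by positivity
  have hdp : SatisfiesDP ε δ Δ (volume.withDensity (tlDens ((1 + u) / (2 * l * u)) l (l * L))) := by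
    refine tl_dp hB hl hΔ.le hD ?_
    rw [e1, e2, Real.exp_add, heL]
    have : Real.exp ε = 1 + 2 * δ * u := by rw [hu]; field_simp; ring
    rw [this]
    field_simp
    ring
  have hprob : IsProbabilityMeasure
      (volume.withDensity (tlDens ((1 + u) / (2 * l * u)) l (l * L))) := by
    constructor
    rw [withDensity_apply _ MeasurableSet.univ, setLIntegral_univ, tl_mass hB hl hA, e1, heL,
      ENNReal.ofReal_eq_one]
    field_simp
    ring
  unfold VoptL2
  refine iInf_le_of_le _ (iInf_le_of_le hprob (iInf_le_of_le hdp ?_))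
  rw [lintegral_withDensity_eq_lintegral_mul _ (tlDens_meas _ _ _) (by fun_prop)]
  simp only [Pi.mul_apply]
  rw [tl_second hB hl hA, e1, heL]
  have : 2 * Δ ^ 2 / ε ^ 2 = 2 * l ^ 2 := by rw [hl']; ring
  rw [this]
  apply le_of_eq
  congr 1
  field_simp
  ring
end

section
/- Let ε > 0, δ ≥ 0, Δ > 0, and let P be a Borel probability measure on ℝ satisfying the (ε,δ)-differential-privacy constraint with sensitivity Δ: for every real d with |d| ≤ Δ and every Borel set S ⊆ ℝ, P(S) ≤ e^ε·P(S + d) + δ. Let N be a positive integer and define the discrete probability mass function p on ℤ by p(i) = P([Δ(2i−1)/(2N), Δ(2i+1)/(2N))). Then p satisfies the discrete (ε,δ)-differential-privacy constraint with sensitivity N: for every S ⊆ ℤ and every integer d with |d| ≤ N, Σ_{i∈S} p(i) − e^ε·Σ_{i∈S} p(i + d) ≤ δ. -/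
open MeasureTheory Real

/-- Discretizing a continuous (ε,δ)-differentially private noise
distribution with sensitivity `Δ` into bins of width `Δ/N` yields a discrete
probability mass function on ℤ satisfying the discrete (ε,δ)-DP constraint with
sensitivity `N`. -/
theorem discretization_preserves_dp
    (ε δ Δ : ℝ) (hε : 0 < ε) (hδ : 0 ≤ δ) (hΔ : 0 < Δ)
    (P : Measure ℝ) [IsProbabilityMeasure P]
    (hP : SatisfiesDP ε δ Δ P)
    (N : ℕ) (hN : 0 < N)
    (p : ℤ → ENNReal)
    (hp : ∀ i : ℤ, p i =
      P (Set.Ico (Δ * (2 * (i : ℝ) - 1) / (2 * N)) (Δ * (2 * (i : ℝ) + 1) / (2 * N)))) :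
    ∀ S : Set ℤ, ∀ d : ℤ, |d| ≤ (N : ℤ) →
      (∑' i : S, p i)
        ≤ ENNReal.ofReal (Real.exp ε) * (∑' i : S, p ((i : ℤ) + d))
          + ENNReal.ofReal δ := by
  intro S d hd
  have hN' : (0 : ℝ) < N := by exact_mod_cast hN
  obtain ⟨B, hB⟩ : ∃ B : ℤ → Set ℝ, ∀ i : ℤ, B i =
    Set.Ico (Δ * (2 * (i : ℝ) - 1) / (2 * N)) (Δ * (2 * (i : ℝ) + 1) / (2 * N)) :=
    ⟨_, fun _ => rfl⟩
  have hpB : ∀ i, p i = P (B i) := fun i => by rw [hp, hB]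
  have hmeas : ∀ i, MeasurableSet (B i) := fun i => by rw [hB]; exact measurableSet_Ico
  have hlt : ∀ i j : ℤ, i < j → Disjoint (B i) (B j) := by
    intro i j hij
    rw [Set.disjoint_left]
    intro x hx hy
    rw [hB] at hx hy
    have h1 : ((i : ℝ) + 1) ≤ j := by exact_mod_cast hij
    have h2 : Δ * (2 * (i : ℝ) + 1) / (2 * N) ≤ Δ * (2 * (j : ℝ) - 1) / (2 * N) := by
      apply div_le_div_of_nonneg_right _ (by positivity)
      apply mul_le_mul_of_nonneg_left _ hΔ.le
      linarith
    exact absurd (hx.2.trans_le (h2.trans hy.1)) (lt_irrefl x)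
  have hdisj : ∀ i j : ℤ, i ≠ j → Disjoint (B i) (B j) := by
    intro i j hij
    rcases lt_or_gt_of_ne hij with h | h
    · exact hlt i j h
    · exact (hlt j i h).symm
  have hshift : ∀ i : ℤ, (fun s => s + Δ * (d : ℝ) / N) '' (B i) = B (i + d) := by
    intro i
    simp only [hB, Set.image_add_const_Ico]
    push_cast
    congr 1 <;> field_simp <;> ring
  have hc : |Δ * (d : ℝ) / N| ≤ Δ := by
    have h1 : |(d : ℝ)| ≤ N := by exact_mod_cast hd
    rw [abs_div, abs_mul, abs_of_pos hΔ, abs_of_pos hN', div_le_iff₀ hN']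
    exact mul_le_mul_of_nonneg_left h1 hΔ.le
  have key := hP (Δ * (d : ℝ) / N) hc (⋃ i : S, B i) (MeasurableSet.iUnion fun i => hmeas i)
  rw [Set.image_iUnion] at key
  simp only [hshift] at key
  rw [measure_iUnion (fun i j hij => hdisj _ _ (fun h => hij (Subtype.ext h))) (fun i => hmeas i),
    measure_iUnion (fun i j hij => hdisj _ _ (fun h => hij (Subtype.ext (add_right_cancel h))))
      (fun i => hmeas _)] at key
  simp only [hpB]
  exact key
end

section
/- Let ε > 0, δ > 0, Δ > 0, set a = (δ + (e^ε − 1)/2)/e^ε and b = e^{−ε}, and suppose n is a positive integer with Σ_{k=0}^{n−1} a·b^k = 1/2. Then the minimum noise amplitude satisfies the lower bound V_opt^{L1}(ε, δ, Δ) ≥ 2a·Δ·Σ_{k=0}^{n−1} b^k·k = 2a·((b − bⁿ)/(1 − b)² − (n − 1)·bⁿ/(1 − b))·Δ. -/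
open MeasureTheory Real

lemma aux_pointwise (Δ : ℝ) (hΔ : 0 < Δ) (x : ℝ) (m : ℕ) :
    (∑ k ∈ Finset.range m, (if ((k : ℝ) + 1) * Δ ≤ |x| then Δ else 0)) ≤ |x| ∧
    (∑ k ∈ Finset.range m, (if ((k : ℝ) + 1) * Δ ≤ |x| then Δ else 0)) ≤ m * Δ := by
  induction m with
  | zero => simp
  | succ m ih =>
    obtain ⟨h1, h2⟩ := ih
    rw [Finset.sum_range_succ]
    push_cast
    split_ifs with h
    · constructor <;> linarith
    · constructor <;> linarith

lemma aux_closed (b : ℝ) (hb : b ≠ 1) (n : ℕ) :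
    ∑ k ∈ Finset.range n, b ^ k * (k : ℝ)
      = (b - b ^ n) / (1 - b) ^ 2 - ((n : ℝ) - 1) * b ^ n / (1 - b) := by
  have h : 1 - b ≠ 0 := sub_ne_zero.mpr (Ne.symm hb)
  induction n with
  | zero => simp; field_simp; ring
  | succ n ih =>
    rw [Finset.sum_range_succ, ih]
    push_cast
    field_simp
    ring

lemma aux_sum (c : ℕ → ℝ) (n : ℕ) :
    ∑ k ∈ Finset.range n, (∑ j ∈ Finset.range n, c j - ∑ j ∈ Finset.range (k + 1), c j)
      = ∑ k ∈ Finset.range n, c k * (k : ℝ) := by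
  induction n with
  | zero => simp
  | succ n ih =>
    rw [Finset.sum_range_succ, Finset.sum_range_succ (fun k => c k * (k : ℝ)), ← ih, sub_self,
      add_zero]
    simp only [Finset.sum_range_succ, Finset.sum_sub_distrib, Finset.sum_add_distrib,
      Finset.sum_const, Finset.card_range, nsmul_eq_mul]
    ring

lemma aux_dp (ε δ Δ : ℝ) (hδ : 0 < δ) (P : Measure ℝ) [IsProbabilityMeasure P]
    (hP : SatisfiesDP ε δ Δ P) (d : ℝ) (hd : |d| ≤ Δ) (S T : Set ℝ) (hS : MeasurableSet S)
    (hT : (fun s => s + d) '' S = T) :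
    P.real S ≤ Real.exp ε * P.real T + δ := by
  have h := hP d hd S hS
  rw [hT] at h
  have h' : P S ≤ ENNReal.ofReal (Real.exp ε * P.real T + δ) := by
    rw [ENNReal.ofReal_add (by positivity) hδ.le, ENNReal.ofReal_mul (by positivity),
      ofReal_measureReal]
    exact h
  exact ENNReal.toReal_le_of_le_ofReal (by positivity) h'

lemma aux_tail (ε δ Δ : ℝ) (hδ : 0 < δ) (hΔ : 0 < Δ) (P : Measure ℝ)
    [IsProbabilityMeasure P] (hP : SatisfiesDP ε δ Δ P) (a b : ℝ)
    (ha : a = (δ + (Real.exp ε - 1) / 2) / Real.exp ε) (hb : b = Real.exp (-ε)) (k : ℕ) :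
    2 * (1 / 2 - ∑ j ∈ Finset.range k, a * b ^ j)
      ≤ P.real (Set.Ici (k * Δ)) + P.real (Set.Iic (-(k * Δ))) := by
  induction k with
  | zero =>
    have h : P.real Set.univ ≤ P.real (Set.Ici (0 : ℝ)) + P.real (Set.Iic (0 : ℝ)) := by
      rw [← Set.Ici_union_Iic (a := (0 : ℝ))]
      exact measureReal_union_le _ _
    simpa using h
  | succ k ih =>
    have h1 := aux_dp ε δ Δ hδ P hP Δ (abs_of_pos hΔ).le (Set.Ici (k * Δ))
      (Set.Ici ((k + 1 : ℕ) * Δ)) measurableSet_Ici (by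
        rw [Set.image_add_const_Ici]; push_cast; congr 1; ring)
    have h2 := aux_dp ε δ Δ hδ P hP (-Δ) (by rw [abs_neg]; exact (abs_of_pos hΔ).le)
      (Set.Iic (-(k * Δ))) (Set.Iic (-((k + 1 : ℕ) * Δ))) measurableSet_Iic (by
        rw [Set.image_add_const_Iic]; push_cast; congr 1; ring)
    set u := P.real (Set.Ici ((k + 1 : ℕ) * Δ))
    set v := P.real (Set.Iic (-((k + 1 : ℕ) * Δ)))
    have he : 0 < Real.exp ε := Real.exp_pos ε
    have hbe : Real.exp ε * b = 1 := by rw [hb, ← Real.exp_add]; simp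
    have hae : Real.exp ε * a = δ + (Real.exp ε - 1) / 2 := by rw [ha]; field_simp
    have hs : Real.exp ε * ∑ j ∈ Finset.range (k + 1), a * b ^ j
        = δ + (Real.exp ε - 1) / 2 + ∑ j ∈ Finset.range k, a * b ^ j := by
      rw [Finset.sum_range_succ', mul_add, pow_zero, mul_one, hae, Finset.mul_sum, add_comm]
      congr 1
      apply Finset.sum_congr rfl
      intro j _
      calc Real.exp ε * (a * b ^ (j + 1)) = (Real.exp ε * b) * (a * b ^ j) := by ring
        _ = _ := by rw [hbe, one_mul]
    refine le_of_mul_le_mul_left ?_ he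
    nlinarith

lemma aux_lower (Δ : ℝ) (hΔ : 0 < Δ) (P : Measure ℝ) [IsProbabilityMeasure P] (m : ℕ) :
    ENNReal.ofReal (∑ k ∈ Finset.range m,
      Δ * (P.real (Set.Ici ((k + 1 : ℕ) * Δ)) + P.real (Set.Iic (-((k + 1 : ℕ) * Δ)))))
      ≤ ∫⁻ x : ℝ, ENNReal.ofReal |x| ∂P := by
  have key : ∀ k : ℕ, MeasurableSet {x : ℝ | ((k : ℝ) + 1) * Δ ≤ |x|} := fun k =>
    measurableSet_le measurable_const measurable_id.abs
  calc _ = ∑ k ∈ Finset.range m, ENNReal.ofReal Δ * P {x : ℝ | ((k : ℝ) + 1) * Δ ≤ |x|} := by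
        rw [ENNReal.ofReal_sum_of_nonneg (fun i _ => by positivity)]
        apply Finset.sum_congr rfl
        intro k _
        have hpos : 0 < ((k + 1 : ℕ) : ℝ) * Δ := by positivity
        rw [← measureReal_union _ measurableSet_Iic, ENNReal.ofReal_mul hΔ.le,
          ofReal_measureReal]
        · congr 2
          ext x
          simp only [Set.mem_union, Set.mem_Ici, Set.mem_Iic, Set.mem_ofPred_eq, le_abs, le_neg]
          push_cast
          rfl
        · rw [Set.disjoint_left]
          intro x hx hx'
          simp only [Set.mem_Ici, Set.mem_Iic] at hx hx'
          linarith
    _ = ∫⁻ x : ℝ, ∑ k ∈ Finset.range m,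
          ({x : ℝ | ((k : ℝ) + 1) * Δ ≤ |x|}.indicator (fun _ => ENNReal.ofReal Δ) x) ∂P := by
        rw [lintegral_finsetSum _ (fun k _ => measurable_const.indicator (key k))]
        apply Finset.sum_congr rfl
        intro k _
        rw [lintegral_indicator_const (key k)]
    _ ≤ _ := by
        apply lintegral_mono
        intro x
        have h := ENNReal.ofReal_le_ofReal (aux_pointwise Δ hΔ x m).1
        rw [ENNReal.ofReal_sum_of_nonneg (fun i _ => by split_ifs <;> positivity)] at h
        refine le_trans (le_of_eq ?_) h
        apply Finset.sum_congr rfl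
        intro k _
        simp only [Set.indicator_apply, Set.mem_ofPred_eq]
        split_ifs <;> simp

/-- Lower bound on the minimum noise amplitude:
`V_opt^{L1}(ε, δ, Δ) ≥ 2aΔ Σ_{k=0}^{n−1} b^k k
  = 2a((b − bⁿ)/(1 − b)² − (n − 1)bⁿ/(1 − b))Δ`. -/
theorem VoptL1_lower_bound
    (ε δ Δ : ℝ) (hε : 0 < ε) (hδ : 0 < δ) (hΔ : 0 < Δ)
    (a b : ℝ)
    (ha : a = (δ + (Real.exp ε - 1) / 2) / Real.exp ε)
    (hb : b = Real.exp (-ε))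
    (n : ℕ) (hn : 0 < n)
    (hhalf : ∑ k ∈ Finset.range n, a * b ^ k = 1 / 2) :
    VoptL1 ε δ Δ
        ≥ ENNReal.ofReal (2 * a * Δ * ∑ k ∈ Finset.range n, b ^ k * (k : ℝ))
      ∧ 2 * a * Δ * ∑ k ∈ Finset.range n, b ^ k * (k : ℝ)
        = 2 * a * ((b - b ^ n) / (1 - b) ^ 2 - ((n : ℝ) - 1) * b ^ n / (1 - b)) * Δ := by
  constructor
  · unfold VoptL1
    refine le_iInf fun P => le_iInf fun hPp => le_iInf fun hP => ?_
    refine le_trans (ENNReal.ofReal_le_ofReal ?_) (aux_lower Δ hΔ P n)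
    have h := aux_sum (fun k => a * b ^ k) n
    rw [hhalf] at h
    have h3 : 2 * a * Δ * ∑ k ∈ Finset.range n, b ^ k * (k : ℝ)
        = ∑ k ∈ Finset.range n, Δ * (2 * (1 / 2 - ∑ j ∈ Finset.range (k + 1), a * b ^ j)) := by
      calc _ = 2 * Δ * ∑ k ∈ Finset.range n, a * b ^ k * (k : ℝ) := by
            rw [Finset.mul_sum, Finset.mul_sum]
            exact Finset.sum_congr rfl fun _ _ => by ring
        _ = _ := by
            rw [← h, Finset.mul_sum]
            exact Finset.sum_congr rfl fun _ _ => by ring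
    rw [h3]
    exact Finset.sum_le_sum fun k _ =>
      mul_le_mul_of_nonneg_left (aux_tail ε δ Δ hδ hΔ P hP a b ha hb (k + 1)) hΔ.le
  · have hb1 : b ≠ 1 := by
      rw [hb]
      exact (Real.exp_lt_one_iff.mpr (by linarith)).ne
    rw [aux_closed b hb1 n]
    ring
end

section
/- Let ε > 0, δ > 0, Δ > 0, set a = (δ + (e^ε − 1)/2)/e^ε and b = e^{−ε}, and suppose n is a positive integer with Σ_{k=0}^{n−1} a·b^k = 1/2. Then the minimum noise power satisfies the lower bound V_opt^{L2}(ε, δ, Δ) ≥ 2a·Δ²·Σ_{k=0}^{n−1} b^k·k². -/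
open MeasureTheory Real

theorem aux_shift (ε δ Δ : ℝ) (hδ : 0 < δ) (P : Measure ℝ)
    [IsProbabilityMeasure P] (h : SatisfiesDP ε δ Δ P) (d : ℝ) (hd : |d| ≤ Δ)
    (S S' : Set ℝ) (hS : MeasurableSet S) (hSS : (fun s => s + d) '' S ⊆ S') :
    P.real S ≤ Real.exp ε * P.real S' + δ := by
  have h1 := h d hd S hS
  have h2 : P S ≤ ENNReal.ofReal (Real.exp ε) * P S' + ENNReal.ofReal δ :=
    h1.trans (by gcongr)
  have h3 := ENNReal.toReal_mono (by finiteness) h2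
  rw [ENNReal.toReal_add (by finiteness) (by finiteness), ENNReal.toReal_mul,
    ENNReal.toReal_ofReal (Real.exp_pos _).le, ENNReal.toReal_ofReal hδ.le] at h3
  exact h3

theorem aux_point (Δ x : ℝ) (hΔ : 0 < Δ) (m : ℕ) :
    ∑ k ∈ Finset.range m, (if ((k : ℝ) + 1) * Δ ≤ |x| then Δ ^ 2 * (2 * (k : ℝ) + 1) else 0)
      ≤ x ^ 2 := by
  induction m with
  | zero => simp; positivity
  | succ m ih =>
    by_cases hm : ((m : ℝ) + 1) * Δ ≤ |x|
    · have h1 : ∀ j : ℕ, ∑ k ∈ Finset.range j,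
          (if ((k : ℝ) + 1) * Δ ≤ |x| then Δ ^ 2 * (2 * (k : ℝ) + 1) else 0)
          ≤ Δ ^ 2 * (j : ℝ) ^ 2 := by
        intro j
        induction j with
        | zero => simp
        | succ j ihj =>
          rw [Finset.sum_range_succ]
          have : (if ((j : ℝ) + 1) * Δ ≤ |x| then Δ ^ 2 * (2 * (j : ℝ) + 1) else 0)
              ≤ Δ ^ 2 * (2 * (j : ℝ) + 1) := by
            split_ifs
            · exact le_rfl
            · positivity
          push_cast
          nlinarith
      refine (h1 (m + 1)).trans ?_
      push_cast
      rw [← sq_abs x, ← mul_pow, mul_comm]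
      gcongr
    · rw [Finset.sum_range_succ, if_neg hm, add_zero]
      exact ih

theorem aux_abel (T : ℕ → ℝ) (m : ℕ) :
    ∑ k ∈ Finset.range m, (T k - T (k + 1)) * (k : ℝ) ^ 2
      = ∑ k ∈ Finset.range m, (2 * (k : ℝ) + 1) * T (k + 1) - (m : ℝ) ^ 2 * T m := by
  induction m with
  | zero => simp
  | succ m ih =>
    rw [Finset.sum_range_succ, Finset.sum_range_succ, ih]
    push_cast
    ring

/-- Lower bound on the minimum noise power:
`V_opt^{L2}(ε, δ, Δ) ≥ 2aΔ² Σ_{k=0}^{n−1} b^k k²`. -/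
theorem VoptL2_lower_bound
    (ε δ Δ : ℝ) (hε : 0 < ε) (hδ : 0 < δ) (hΔ : 0 < Δ)
    (a b : ℝ)
    (ha : a = (δ + (Real.exp ε - 1) / 2) / Real.exp ε)
    (hb : b = Real.exp (-ε))
    (n : ℕ) (hn : 0 < n)
    (hhalf : ∑ k ∈ Finset.range n, a * b ^ k = 1 / 2) :
    VoptL2 ε δ Δ
      ≥ ENNReal.ofReal (2 * a * Δ ^ 2 * ∑ k ∈ Finset.range n, b ^ k * (k : ℝ) ^ 2) := by
  have hbpos : 0 < b := hb ▸ Real.exp_pos _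
  have heb : b * Real.exp ε = 1 := by rw [hb, ← Real.exp_add]; simp
  have ha' : a = δ * b + (1 - b) / 2 := by
    rw [ha, div_eq_iff (Real.exp_pos _).ne']
    linear_combination (-δ + 1 / 2) * heb
  obtain ⟨T, hT⟩ : ∃ T : ℕ → ℝ, ∀ k, T k = 1 - 2 * ∑ j ∈ Finset.range k, a * b ^ j :=
    ⟨_, fun _ => rfl⟩
  have hTd : ∀ k, T k - T (k + 1) = 2 * a * b ^ k := by
    intro k
    rw [hT, hT, Finset.sum_range_succ]
    ring
  have hT0 : T 0 = 1 := by simp [hT]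
  have hTn : T n = 0 := by rw [hT, hhalf]; norm_num
  have hTs : ∀ k, T (k + 1) = b * (T k - 2 * δ) := by
    intro k
    induction k with
    | zero =>
      have := hTd 0
      rw [pow_zero] at this
      linear_combination (1 - b) * hT0 - this - 2 * ha'
    | succ k ih =>
      have h1 := hTd k
      have h2 := hTd (k + 1)
      rw [pow_succ] at h2
      linear_combination ih - h2 + b * h1
  have hsum : 2 * a * Δ ^ 2 * ∑ k ∈ Finset.range n, b ^ k * (k : ℝ) ^ 2
      = ∑ k ∈ Finset.range n, Δ ^ 2 * (2 * (k : ℝ) + 1) * T (k + 1) := by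
    have h := aux_abel T n
    rw [hTn, mul_zero, sub_zero] at h
    calc _ = Δ ^ 2 * ∑ k ∈ Finset.range n, (T k - T (k + 1)) * (k : ℝ) ^ 2 := by
          rw [Finset.mul_sum, Finset.mul_sum]
          refine Finset.sum_congr rfl fun k _ => ?_
          rw [hTd]; ring
      _ = _ := by
          rw [h, Finset.mul_sum]
          refine Finset.sum_congr rfl fun k _ => ?_
          ring
  rw [hsum]
  refine le_iInf fun P => le_iInf fun hP => le_iInf fun hDP => ?_
  have hU : ∀ k : ℕ, T k ≤ P.real (Set.Ici ((k : ℝ) * Δ)) + P.real (Set.Iic (-((k : ℝ) * Δ))) := by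
    intro k
    induction k with
    | zero =>
      rw [hT0]
      have h := measureReal_union_le (μ := P) (Set.Ici (0 : ℝ)) (Set.Iic (0 : ℝ))
      have hu : Set.Ici (0 : ℝ) ∪ Set.Iic (0 : ℝ) = Set.univ := by
        ext x; simpa using le_total 0 x
      rw [hu, probReal_univ] at h
      simpa using h
    | succ k ih =>
      have h1 := aux_shift ε δ Δ hδ P hDP Δ (abs_of_pos hΔ).le (Set.Ici ((k : ℝ) * Δ))
        (Set.Ici (((k + 1 : ℕ) : ℝ) * Δ)) measurableSet_Ici (by
          rintro _ ⟨x, hx, rfl⟩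
          simp only [Set.mem_Ici] at hx ⊢
          push_cast
          linarith)
      have h2 := aux_shift ε δ Δ hδ P hDP (-Δ) (by rw [abs_neg, abs_of_pos hΔ])
        (Set.Iic (-((k : ℝ) * Δ)))
        (Set.Iic (-(((k + 1 : ℕ) : ℝ) * Δ))) measurableSet_Iic (by
          rintro _ ⟨x, hx, rfl⟩
          simp only [Set.mem_Iic] at hx ⊢
          push_cast
          linarith)
      rw [hTs]
      generalize P.real (Set.Ici (((k + 1 : ℕ) : ℝ) * Δ)) = r at *
      generalize P.real (Set.Iic (-(((k + 1 : ℕ) : ℝ) * Δ))) = l at *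
      have h3 : T k - 2 * δ ≤ Real.exp ε * (r + l) := by linarith
      calc b * (T k - 2 * δ) ≤ b * (Real.exp ε * (r + l)) := by gcongr
        _ = r + l := by rw [← mul_assoc, heb, one_mul]
  have hA : ∀ k : ℕ, T (k + 1) ≤ P.real {x : ℝ | ((k : ℝ) + 1) * Δ ≤ |x|} := by
    intro k
    have hpos : 0 < ((k : ℝ) + 1) * Δ := by positivity
    have h := hU (k + 1)
    push_cast at h
    rw [← measureReal_union _ measurableSet_Iic] at h
    · refine h.trans (measureReal_mono ?_)
      rintro x (hx | hx)
      · exact le_trans hx (le_abs_self x)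
      · have hx' : x ≤ -(((k : ℝ) + 1) * Δ) := hx
        have := neg_le_abs x
        show ((k : ℝ) + 1) * Δ ≤ |x|
        linarith
    · rw [Set.disjoint_left]
      intro x hx hx'
      simp only [Set.mem_Ici, Set.mem_Iic] at hx hx'
      linarith
  have hAm : ∀ k : ℕ, MeasurableSet {x : ℝ | ((k : ℝ) + 1) * Δ ≤ |x|} := fun k =>
    measurableSet_le measurable_const (by fun_prop)
  calc ENNReal.ofReal (∑ k ∈ Finset.range n, Δ ^ 2 * (2 * (k : ℝ) + 1) * T (k + 1))
      ≤ ENNReal.ofReal (∑ k ∈ Finset.range n, Δ ^ 2 * (2 * (k : ℝ) + 1) *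
          P.real {x : ℝ | ((k : ℝ) + 1) * Δ ≤ |x|}) := by
        refine ENNReal.ofReal_le_ofReal (Finset.sum_le_sum fun k _ => ?_)
        exact mul_le_mul_of_nonneg_left (hA k) (by positivity)
    _ = ∑ k ∈ Finset.range n, ENNReal.ofReal (Δ ^ 2 * (2 * (k : ℝ) + 1)) *
          P {x : ℝ | ((k : ℝ) + 1) * Δ ≤ |x|} := by
        rw [ENNReal.ofReal_sum_of_nonneg (fun k _ => by positivity)]
        refine Finset.sum_congr rfl fun k _ => ?_
        rw [ENNReal.ofReal_mul (by positivity), ofReal_measureReal]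
    _ = ∑ k ∈ Finset.range n, ∫⁻ x, Set.indicator {x : ℝ | ((k : ℝ) + 1) * Δ ≤ |x|}
          (fun _ => ENNReal.ofReal (Δ ^ 2 * (2 * (k : ℝ) + 1))) x ∂P := by
        refine Finset.sum_congr rfl fun k _ => ?_
        rw [lintegral_indicator_const (hAm k)]
    _ = ∫⁻ x, ∑ k ∈ Finset.range n, Set.indicator {x : ℝ | ((k : ℝ) + 1) * Δ ≤ |x|}
          (fun _ => ENNReal.ofReal (Δ ^ 2 * (2 * (k : ℝ) + 1))) x ∂P := by
        rw [lintegral_finsetSum]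
        intro k _
        exact measurable_const.indicator (hAm k)
    _ ≤ ∫⁻ x : ℝ, ENNReal.ofReal (x ^ 2) ∂P := by
        refine lintegral_mono fun x => ?_
        refine le_trans (le_of_eq ?_) (ENNReal.ofReal_le_ofReal (aux_point Δ x hΔ n))
        rw [ENNReal.ofReal_sum_of_nonneg (fun k _ => by split_ifs <;> positivity)]
        refine Finset.sum_congr rfl fun k _ => ?_
        simp only [Set.indicator_apply, Set.mem_setOf_eq]
        split_ifs <;> simp
end

section
/- Fix δ ∈ (0, 1/2) and Δ > 0. Then the minimum noise amplitude satisfies liminf_{ε → 0⁺} V_opt^{L1}(ε, δ, Δ) ≥ (1/(4δ) − 1/2)·Δ; together with the upper bound limsup_{ε → 0⁺} V_opt^{L1}(ε, δ, Δ) ≤ Δ/(4δ), it follows that the ratio of the lower to the upper bound is at least 1 − 2δ in the limit ε → 0. -/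
open MeasureTheory Real Filter Topology

/-- The recursive tail bound. -/
noncomputable def tailBound (δ q : ℝ) : ℕ → ℝ
  | 0 => 1
  | k + 1 => q * (tailBound δ q k - 2 * δ)

lemma tailBound_one (δ : ℝ) (k : ℕ) : tailBound δ 1 k = 1 - 2 * k * δ := by
  induction k with
  | zero => simp [tailBound]
  | succ k ih => rw [tailBound, ih]; push_cast; ring

lemma tailBound_cont (δ : ℝ) (k : ℕ) : Continuous (fun q => tailBound δ q k) := by
  induction k with
  | zero => simpa [tailBound] using continuous_const
  | succ k ih => simp only [tailBound]; fun_prop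

lemma dp_real {ε δ Δ : ℝ} {P : Measure ℝ} [IsProbabilityMeasure P] (hδ : 0 ≤ δ)
    (h : SatisfiesDP ε δ Δ P) (d : ℝ) (hd : |d| ≤ Δ) (S T : Set ℝ) (hS : MeasurableSet S)
    (hT : (fun s => s + d) '' S = T) :
    Real.exp (-ε) * (P.real S - δ) ≤ P.real T := by
  have h1 := h d hd S hS
  rw [hT] at h1
  have h2 := ENNReal.toReal_mono (by finiteness) h1
  rw [ENNReal.toReal_add (by finiteness) (by finiteness), ENNReal.toReal_mul,
    ENNReal.toReal_ofReal (Real.exp_pos _).le, ENNReal.toReal_ofReal hδ] at h2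
  change P.real S ≤ Real.exp ε * P.real T + δ at h2
  calc Real.exp (-ε) * (P.real S - δ) ≤ Real.exp (-ε) * (Real.exp ε * P.real T) := by
        gcongr; linarith
    _ = P.real T := by rw [← mul_assoc, ← Real.exp_add]; simp

lemma tail_ge {ε δ Δ : ℝ} {P : Measure ℝ} [IsProbabilityMeasure P] (hδ : 0 ≤ δ) (hΔ : 0 < Δ)
    (h : SatisfiesDP ε δ Δ P) (k : ℕ) :
    tailBound δ (Real.exp (-ε)) k ≤ P.real (Set.Ici (k * Δ)) + P.real (Set.Iic (-(k * Δ))) := by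
  induction k with
  | zero =>
    have h1 : P.real (Set.Ici 0 ∪ Set.Iic (0:ℝ)) ≤ _ := measureReal_union_le _ _
    have h2 : (Set.Ici 0 ∪ Set.Iic (0:ℝ)) = Set.univ := by
      ext x; simpa using le_total 0 x
    rw [h2] at h1
    simpa [tailBound] using h1
  | succ k ih =>
    have h1 := dp_real hδ h Δ (abs_of_pos hΔ).le (Set.Ici (k * Δ)) (Set.Ici ((k + 1 : ℕ) * Δ))
      measurableSet_Ici (by rw [Set.image_add_const_Ici]; push_cast; ring_nf)
    have h2 := dp_real hδ h (-Δ) (by rw [abs_neg]; exact (abs_of_pos hΔ).le)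
      (Set.Iic (-(k * Δ))) (Set.Iic (-((k + 1 : ℕ) * Δ)))
      measurableSet_Iic (by rw [Set.image_add_const_Iic]; push_cast; ring_nf)
    have h3 := mul_le_mul_of_nonneg_left ih (Real.exp_pos (-ε)).le
    rw [tailBound]
    linarith

lemma pointwise_count {Δ : ℝ} (hΔ : 0 < Δ) (n : ℕ) (x : ℝ) :
    ∑ k ∈ Finset.range n, ((Set.Ici (((k + 1 : ℕ) : ℝ) * Δ)).indicator (fun _ => Δ) x
      + (Set.Iic (-(((k + 1 : ℕ) : ℝ) * Δ))).indicator (fun _ => Δ) x) ≤ min |x| (n * Δ) := by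
  induction n with
  | zero => simp
  | succ n ih =>
    rw [Finset.sum_range_succ]
    set s := ∑ k ∈ Finset.range n, ((Set.Ici (((k + 1 : ℕ) : ℝ) * Δ)).indicator (fun _ => Δ) x
      + (Set.Iic (-(((k + 1 : ℕ) : ℝ) * Δ))).indicator (fun _ => Δ) x)
    have i1 := ih.trans (min_le_left _ _)
    have i2 := ih.trans (min_le_right _ _)
    have hp : 0 < ((n + 1 : ℕ) : ℝ) * Δ := by positivity
    have he : ((n + 1 : ℕ) : ℝ) * Δ = n * Δ + Δ := by push_cast; ring
    simp only [Set.indicator, Set.mem_Ici, Set.mem_Iic]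
    split_ifs with c1 c2 c2
    · linarith
    · rw [le_min_iff]; constructor <;> linarith [le_abs_self x]
    · rw [le_min_iff]; constructor <;> linarith [neg_le_abs x]
    · rw [le_min_iff]; constructor <;> linarith

lemma lower_bound {ε δ Δ : ℝ} (hδ : 0 ≤ δ) (hΔ : 0 < Δ) (n : ℕ) :
    ENNReal.ofReal (∑ k ∈ Finset.range n, Δ * tailBound δ (Real.exp (-ε)) (k + 1))
      ≤ VoptL1 ε δ Δ := by
  unfold VoptL1
  refine le_iInf fun P => le_iInf fun hP => le_iInf fun h => ?_
  have hi : ∀ s : Set ℝ, MeasurableSet s → Integrable (s.indicator fun _ => Δ) P := fun s hs =>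
    (integrable_const Δ).indicator hs
  have key : ∑ k ∈ Finset.range n, Δ * tailBound δ (Real.exp (-ε)) (k + 1) ≤
      ∫ x, ∑ k ∈ Finset.range n, ((Set.Ici (((k + 1 : ℕ) : ℝ) * Δ)).indicator (fun _ => Δ) x
      + (Set.Iic (-(((k + 1 : ℕ) : ℝ) * Δ))).indicator (fun _ => Δ) x) ∂P := by
    rw [integral_finsetSum]
    · refine Finset.sum_le_sum fun k _ => ?_
      rw [integral_add (hi _ measurableSet_Ici) (hi _ measurableSet_Iic),
        integral_indicator_const _ measurableSet_Ici, integral_indicator_const _ measurableSet_Iic]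
      have := mul_le_mul_of_nonneg_left (tail_ge hδ hΔ h (k + 1)) hΔ.le
      simp only [smul_eq_mul]
      linarith
    · intro k _
      exact (hi _ measurableSet_Ici).add (hi _ measurableSet_Iic)
  refine (ENNReal.ofReal_le_ofReal key).trans ?_
  rw [ofReal_integral_eq_lintegral_ofReal]
  · refine lintegral_mono fun x => ENNReal.ofReal_le_ofReal ?_
    exact (pointwise_count hΔ n x).trans (min_le_left _ _)
  · refine integrable_finsetSum _ fun k _ => ?_
    exact (hi _ measurableSet_Ici).add (hi _ measurableSet_Iic)
  · refine Eventually.of_forall fun x => Finset.sum_nonneg fun k _ => ?_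
    exact add_nonneg (Set.indicator_nonneg (fun _ _ => hΔ.le) _)
      (Set.indicator_nonneg (fun _ _ => hΔ.le) _)

lemma sum_lower {δ Δ : ℝ} (hδ : 0 < δ) (hΔ : 0 < Δ) :
    ∃ n : ℕ, (1 / (4 * δ) - 1 / 2) * Δ ≤ ∑ k ∈ Finset.range n, Δ * tailBound δ 1 (k + 1) := by
  have hs : ∀ n : ℕ, ∑ k ∈ Finset.range n, Δ * tailBound δ 1 (k + 1)
      = Δ * (n - δ * n * (n + 1)) := by
    intro n
    induction n with
    | zero => simp
    | succ n ih => rw [Finset.sum_range_succ, ih, tailBound_one]; push_cast; ring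
  refine ⟨⌊1 / (2 * δ)⌋₊, ?_⟩
  rw [hs]
  obtain ⟨m, hm⟩ : ∃ m, m = 1 / (2 * δ) := ⟨_, rfl⟩
  have hm0 : 0 < m := by rw [hm]; positivity
  have hd : δ = 1 / (2 * m) := by rw [hm]; field_simp
  rw [← hm]
  have h1 : (⌊m⌋₊ : ℝ) ≤ m := Nat.floor_le hm0.le
  have h2 : m < ⌊m⌋₊ + 1 := Nat.lt_floor_add_one m
  generalize (⌊m⌋₊ : ℝ) = n at *
  have : 1 / (4 * δ) - 1 / 2 ≤ n - δ * n * (n + 1) := by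
    rw [hd, ← sub_nonneg]
    have : n - 1 / (2 * m) * n * (n + 1) - (1 / (4 * (1 / (2 * m))) - 1 / 2)
        = (m - n) * (1 - (m - n)) / (2 * m) := by field_simp; ring
    rw [this]
    have a1 : 0 ≤ m - n := by linarith
    have a2 : 0 ≤ 1 - (m - n) := by linarith
    positivity
  nlinarith

lemma vol_shift (a d : ℝ) (S : Set ℝ) :
    volume (S ∩ Set.Icc (-a) a) ≤ volume (((fun s => s + d) '' S) ∩ Set.Icc (-a) a)
      + ENNReal.ofReal |d| := by
  have hsub : S ∩ Set.Icc (-a) a ⊆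
      ((fun s => s + d) ⁻¹' (((fun s => s + d) '' S) ∩ Set.Icc (-a) a))
        ∪ (if 0 ≤ d then Set.Icc (a - d) a else Set.Icc (-a) (-a - d)) := by
    rintro x ⟨hx, h1, h2⟩
    by_cases hc : x + d ∈ Set.Icc (-a) a
    · exact Or.inl ⟨⟨x, hx, rfl⟩, hc⟩
    · right
      simp only [Set.mem_Icc, not_and_or, not_le] at hc
      split_ifs with h0
      · constructor <;> rcases hc with hc | hc <;> linarith
      · push Not at h0
        constructor <;> rcases hc with hc | hc <;> linarith
  refine (measure_mono hsub).trans ((measure_union_le _ _).trans ?_)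
  rw [measure_preimage_add_right]
  gcongr
  split_ifs with h0
  · rw [Real.volume_Icc, abs_of_nonneg h0]; simp
  · push Not at h0
    rw [Real.volume_Icc, abs_of_neg h0]; ring_nf; exact le_rfl

lemma lintegral_abs_Icc {a : ℝ} (ha : 0 ≤ a) :
    ∫⁻ x in Set.Icc (-a) a, ENNReal.ofReal |x| = ENNReal.ofReal (a ^ 2) := by
  have hint : ∀ u v : ℝ, IntervalIntegrable (fun x : ℝ => |x|) volume u v :=
    fun u v => continuous_abs.intervalIntegrable _ _
  rw [← ofReal_integral_eq_lintegral_ofReal]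
  · congr 1
    rw [integral_Icc_eq_integral_Ioc, ← intervalIntegral.integral_of_le (by linarith),
      ← intervalIntegral.integral_add_adjacent_intervals (hint (-a) 0) (hint 0 a)]
    have e1 : ∫ x in (-a)..0, |x| = ∫ x in (-a)..0, -x := by
      apply intervalIntegral.integral_congr
      intro x hx
      rw [Set.uIcc_of_le (by linarith)] at hx
      exact abs_of_nonpos hx.2
    have e2 : ∫ x in (0:ℝ)..a, |x| = ∫ x in (0:ℝ)..a, x := by
      apply intervalIntegral.integral_congr
      intro x hx
      rw [Set.uIcc_of_le ha] at hx
      exact abs_of_nonneg hx.1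
    rw [e1, e2, intervalIntegral.integral_neg, integral_id, integral_id]
    ring
  · exact continuous_abs.integrableOn_Icc
  · exact Eventually.of_forall fun x => abs_nonneg x

lemma upper_bound {ε δ Δ : ℝ} (hε : 0 ≤ ε) (hδ : 0 < δ) (hΔ : 0 < Δ) :
    VoptL1 ε δ Δ ≤ ENNReal.ofReal (Δ / (4 * δ)) := by
  set a := Δ / (2 * δ) with ha
  have ha0 : 0 < a := by positivity
  set P : Measure ℝ := ENNReal.ofReal (δ / Δ) • volume.restrict (Set.Icc (-a) a) with hP
  have hprob : IsProbabilityMeasure P := by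
    constructor
    rw [hP, Measure.smul_apply, Measure.restrict_apply_univ, Real.volume_Icc, smul_eq_mul,
      ← ENNReal.ofReal_mul (by positivity), ← ENNReal.ofReal_one, ha]
    congr 1
    field_simp
    ring
  have hDP : SatisfiesDP ε δ Δ P := by
    intro d hd S hS
    have hS' : MeasurableSet ((fun s => s + d) '' S) :=
      (MeasurableEquiv.addRight d).measurableSet_image.2 hS
    have h1 : P S ≤ P ((fun s => s + d) '' S) + ENNReal.ofReal δ := by
      rw [hP, Measure.smul_apply, Measure.smul_apply, Measure.restrict_apply hS,
        Measure.restrict_apply hS', smul_eq_mul, smul_eq_mul]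
      calc _ ≤ ENNReal.ofReal (δ / Δ) * (volume (((fun s => s + d) '' S) ∩ Set.Icc (-a) a)
            + ENNReal.ofReal Δ) := by
            gcongr
            exact (vol_shift a d S).trans (by gcongr)
        _ = _ := by
            rw [mul_add, ← ENNReal.ofReal_mul (by positivity), div_mul_cancel₀ _ hΔ.ne']
    refine h1.trans ?_
    gcongr
    refine le_mul_of_one_le_left zero_le ?_
    rw [← ENNReal.ofReal_one]
    exact ENNReal.ofReal_le_ofReal (Real.one_le_exp hε)
  refine (iInf_le_of_le P (iInf_le_of_le hprob (iInf_le_of_le hDP le_rfl))).trans ?_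
  rw [hP, lintegral_smul_measure, lintegral_abs_Icc ha0.le, smul_eq_mul,
    ← ENNReal.ofReal_mul (by positivity), ha]
  apply ENNReal.ofReal_le_ofReal
  apply le_of_eq
  field_simp
  ring

/-- For fixed δ ∈ (0, 1/2) and Δ > 0, as ε → 0⁺ the minimum noise
amplitude satisfies liminf ≥ (1/(4δ) − 1/2)Δ and limsup ≤ Δ/(4δ); the ratio of the
lower to the upper bound is 1 − 2δ. -/
theorem VoptL1_asymptotics_eps_to_zero
    (δ Δ : ℝ) (hδ0 : 0 < δ) (hδ : δ < 1 / 2) (hΔ : 0 < Δ) :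
    Filter.liminf (fun ε : ℝ => VoptL1 ε δ Δ) (nhdsWithin 0 (Set.Ioi 0))
        ≥ ENNReal.ofReal ((1 / (4 * δ) - 1 / 2) * Δ)
      ∧ Filter.limsup (fun ε : ℝ => VoptL1 ε δ Δ) (nhdsWithin 0 (Set.Ioi 0))
        ≤ ENNReal.ofReal (Δ / (4 * δ))
      ∧ ((1 / (4 * δ) - 1 / 2) * Δ) / (Δ / (4 * δ)) = 1 - 2 * δ := by
  refine ⟨?_, ?_, ?_⟩
  · obtain ⟨n, hn⟩ := sum_lower hδ0 hΔ
    have hc : Continuous (fun ε : ℝ => ENNReal.ofReal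
        (∑ k ∈ Finset.range n, Δ * tailBound δ (Real.exp (-ε)) (k + 1))) := by
      refine ENNReal.continuous_ofReal.comp (continuous_finsetSum _ fun k _ => ?_)
      have := (tailBound_cont δ (k + 1)).comp (Real.continuous_exp.comp continuous_neg)
      exact continuous_const.mul this
    have ht := (hc.tendsto 0).mono_left (nhdsWithin_le_nhds (s := Set.Ioi 0))
    have h1 := ht.liminf_eq
    simp only [neg_zero, Real.exp_zero] at h1
    refine (ENNReal.ofReal_le_ofReal hn).trans ?_
    rw [← h1]
    exact liminf_le_liminf (Eventually.of_forall fun ε => lower_bound hδ0.le hΔ n)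
  · refine limsup_le_of_le (h := ?_)
    filter_upwards [self_mem_nhdsWithin] with ε hε
    exact upper_bound (le_of_lt hε) hδ0 hΔ
  · field_simp
    ring
end

section
/- Fix Δ > 0. In the regime δ = ε → 0, the minimum noise amplitude satisfies lim_{ε → 0⁺} (ε/Δ)·V_opt^{L1}(ε, ε, Δ) = 1 − 2·log(3/2); that is, V_opt^{L1}(ε, ε, Δ) is asymptotically (1 − 2·log(3/2))·Δ/ε, and the lower and upper bounds on the minimum noise amplitude are tight in this regime. -/
open MeasureTheory Real Filter Topology

namespace VoptAux

noncomputable def A : ℝ := Real.log (3 / 2)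

lemma exp_A : Real.exp A = 3 / 2 := by
  unfold A; rw [Real.exp_log]; norm_num

lemma A_le : A ≤ 1 / 2 := by
  have := Real.log_le_sub_one_of_pos (x := 3 / 2) (by norm_num)
  unfold A; linarith

lemma A_ge : 1 / 3 ≤ A := by
  have := Real.one_sub_inv_le_log_of_pos (x := 3 / 2) (by norm_num)
  unfold A; norm_num at this ⊢; linarith

noncomputable def k (x : ℝ) : ℝ := 2 / 3 + x - 2 / 3 * Real.exp x

lemma k_le (x : ℝ) : k x ≤ A - 1 / 3 := by
  have h1 := Real.add_one_le_exp (x - A)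
  have h2 : Real.exp x = Real.exp (x - A) * (3 / 2) := by
    rw [← exp_A, ← Real.exp_add]; congr 1; ring
  unfold k; rw [h2]; linarith

lemma k_A : k A = A - 1 / 3 := by
  unfold k; rw [exp_A]; ring

lemma k_nonneg {m : ℝ} (h0 : 0 ≤ m) (h1 : m ≤ A) : 0 ≤ k m := by
  have h2 : Real.exp m ≤ 3 / 2 := by rw [← exp_A]; exact Real.exp_le_exp.2 h1
  have h3 := Real.add_one_le_exp (-m)
  have h4 : Real.exp (-m) * Real.exp m = 1 := by rw [← Real.exp_add]; simp
  have h5 := Real.exp_pos m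
  unfold k
  nlinarith

noncomputable def h (u : ℝ) : ℝ := k (max 0 (min u A))

lemma h_nonneg (u : ℝ) : 0 ≤ h u :=
  k_nonneg (le_max_left _ _) (max_le (by linarith [A_ge]) (min_le_right _ _))

lemma h_le (u : ℝ) : h u ≤ A - 1 / 3 := k_le _

lemma h_neg {u : ℝ} (hu : u ≤ 0) : h u = 0 := by
  unfold h
  rw [max_eq_left ((min_le_left _ _).trans hu)]
  simp [k]

lemma h_mid {u : ℝ} (hu : 0 ≤ u) (hA : u ≤ A) : h u = k u := by
  unfold h
  rw [min_eq_left hA, max_eq_right hu]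

lemma h_big {u : ℝ} (hA : A ≤ u) : h u = A - 1 / 3 := by
  unfold h
  rw [min_eq_right hA, max_eq_right (by linarith [A_ge]), k_A]

lemma h_cont : Continuous h := by
  unfold h k; fun_prop

lemma h_meas : Measurable h := h_cont.measurable

lemma key {u ε : ℝ} (hu : 0 ≤ u) (h0 : 0 < ε) (h1 : ε ≤ 1) :
    Real.exp ε * h u + ε * (1 / 3 - u) - 2 * ε ^ 2 ≤ h (u + ε) := by
  have he : Real.exp ε ≤ 1 + ε + ε ^ 2 := by
    have := Real.abs_exp_sub_one_sub_id_le (x := ε) (by rw [abs_of_pos h0]; exact h1)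
    have := (abs_le.1 this).2
    linarith
  have hA := A_le
  have hA' := A_ge
  rcases le_total u A with h2 | h2
  · rw [h_mid hu h2]
    have h3 : k (u + ε) ≤ h (u + ε) := by
      rcases le_total (u + ε) A with h4 | h4
      · rw [h_mid (by linarith) h4]
      · rw [h_big h4]; exact k_le _
    have h5 : k (u + ε) - Real.exp ε * k u = ε - (Real.exp ε - 1) * (2 / 3 + u) := by
      unfold k; rw [Real.exp_add]; ring
    nlinarith [sq_nonneg ε, mul_nonneg (sub_nonneg.2 he) hu, mul_nonneg (sq_nonneg ε) hu, mul_nonneg (sq_nonneg ε) (sub_nonneg.2 h2)]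
  · rw [h_big h2, h_big (by linarith)]
    nlinarith [sq_nonneg ε, mul_nonneg (sub_nonneg.2 he) (sub_nonneg.2 hA'), mul_nonneg h0.le (sub_nonneg.2 h2), mul_nonneg (sq_nonneg ε) (sub_nonneg.2 hA)]

lemma key2 (u : ℝ) {ε : ℝ} (h0 : 0 < ε) (h1 : ε ≤ 1) :
    ε * (1 / 3 - |u|) - 2 * ε ^ 2 ≤
      (h (u + ε) - Real.exp ε * h u) + (h (-u + ε) - Real.exp ε * h (-u)) := by
  rcases le_total 0 u with hu | hu
  · have := key hu h0 h1
    have h2 := h_nonneg (-u + ε)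
    rw [abs_of_nonneg hu, h_neg (u := -u) (by linarith)]
    linarith
  · have := key (u := -u) (by linarith) h0 h1
    have h2 := h_nonneg (u + ε)
    rw [abs_of_nonpos hu, h_neg (u := u) hu]
    linarith

/-- functional form of the DP constraint -/
lemma dp_fun {ε δ Δ : ℝ} {P : Measure ℝ} (hP : SatisfiesDP ε δ Δ P)
    {d : ℝ} (hd : |d| ≤ Δ) {f : ℝ → ℝ} (hf : Measurable f) (h0 : ∀ x, 0 ≤ f x)
    {L : ℝ} (hL : ∀ x, f x ≤ L) :
    ∫⁻ x, ENNReal.ofReal (f x) ∂P ≤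
      ENNReal.ofReal (Real.exp ε) * ∫⁻ x, ENNReal.ofReal (f (x - d)) ∂P
        + ENNReal.ofReal δ * ENNReal.ofReal L := by
  have e1 := lintegral_eq_lintegral_meas_le P (ae_of_all _ h0) hf.aemeasurable
  have hf2 : Measurable (fun x => f (x - d)) := by fun_prop
  have e2 := lintegral_eq_lintegral_meas_le P (f := fun x => f (x - d))
    (ae_of_all _ (fun x => h0 _)) hf2.aemeasurable
  rw [e1, e2]
  have hL' : ENNReal.ofReal δ * ENNReal.ofReal L
      = ∫⁻ t in Set.Ioi (0 : ℝ), (Set.Ioc 0 L).indicator (fun _ => ENNReal.ofReal δ) t := by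
    rw [lintegral_indicator measurableSet_Ioc, Measure.restrict_restrict measurableSet_Ioc,
      Set.inter_eq_left.2 (fun x hx => hx.1)]
    simp
  rw [hL', ← lintegral_const_mul' _ _ ENNReal.ofReal_ne_top,
    ← lintegral_add_right _ (measurable_const.indicator measurableSet_Ioc)]
  refine setLIntegral_mono' measurableSet_Ioi (fun t ht => ?_)
  by_cases htL : t ≤ L
  · rw [Set.indicator_of_mem (Set.mem_Ioc.2 ⟨ht, htL⟩)]
    have := hP d hd {a | t ≤ f a} (measurableSet_le measurable_const hf)
    convert this using 4
    ext x
    simp only [Set.mem_ofPred_eq, Set.mem_image]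
    constructor
    · intro hx; exact ⟨x - d, hx, by ring⟩
    · rintro ⟨y, hy, rfl⟩; simpa using hy
  · have : {a | t ≤ f a} = ∅ := by
      ext x; simp only [Set.mem_ofPred_eq, Set.mem_empty_iff_false, iff_false]
      intro hx; exact htL (hx.trans (hL x))
    rw [this]; simp

lemma dp_real {ε δ Δ : ℝ} (hδ : 0 ≤ δ) {P : Measure ℝ} [IsProbabilityMeasure P]
    (hP : SatisfiesDP ε δ Δ P)
    {d : ℝ} (hd : |d| ≤ Δ) {f : ℝ → ℝ} (hf : Measurable f) (h0 : ∀ x, 0 ≤ f x)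
    {L : ℝ} (hL : ∀ x, f x ≤ L) :
    ∫ x, f x ∂P ≤ Real.exp ε * ∫ x, f (x - d) ∂P + δ * L := by
  have hL0 : 0 ≤ L := (h0 0).trans (hL 0)
  have key := dp_fun hP hd hf h0 hL
  have i1 : Integrable f P := Integrable.of_bound hf.aestronglyMeasurable L
    (ae_of_all _ fun x => by rw [Real.norm_eq_abs, abs_of_nonneg (h0 x)]; exact hL x)
  have i2 : Integrable (fun x => f (x - d)) P :=
    Integrable.of_bound (by fun_prop : Measurable (fun x => f (x - d))).aestronglyMeasurable L
    (ae_of_all _ fun x => by rw [Real.norm_eq_abs, abs_of_nonneg (h0 _)]; exact hL _)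
  have n2 : 0 ≤ ∫ x, f (x - d) ∂P := integral_nonneg (fun x => h0 _)
  rw [← ofReal_integral_eq_lintegral_ofReal i1 (ae_of_all _ h0),
    ← ofReal_integral_eq_lintegral_ofReal i2 (ae_of_all _ fun x => h0 _),
    ← ENNReal.ofReal_mul (Real.exp_pos _).le, ← ENNReal.ofReal_mul hδ,
    ← ENNReal.ofReal_add (by positivity) (by positivity)] at key
  exact (ENNReal.ofReal_le_ofReal_iff (by positivity)).1 key

lemma lower {Δ ε : ℝ} (hΔ : 0 < Δ) (h0 : 0 < ε) (h1 : ε ≤ 1) {P : Measure ℝ}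
    [IsProbabilityMeasure P] (hP : SatisfiesDP ε ε Δ P) :
    ENNReal.ofReal (1 - 2 * A - 2 * ε) ≤
      ENNReal.ofReal (ε / Δ) * ∫⁻ x : ℝ, ENNReal.ofReal |x| ∂P := by
  have hc : 0 < ε / Δ := by positivity
  set c := ε / Δ with hcdef
  have hcΔ : c * Δ = ε := by rw [hcdef]; field_simp
  by_cases htop : ∫⁻ x : ℝ, ENNReal.ofReal |x| ∂P = ⊤
  · rw [htop, ENNReal.mul_top (by simpa using hc)]; exact le_top
  have ix : Integrable (fun x : ℝ => |x|) P := by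
    refine ⟨by fun_prop, ?_⟩
    rw [hasFiniteIntegral_iff_ofReal (ae_of_all _ fun x => abs_nonneg x)]
    exact lt_top_iff_ne_top.2 htop
  have hm : Measurable h := h_meas
  have d1 := dp_real h0.le hP (d := Δ) (by rw [abs_of_pos hΔ])
    (f := fun x => h (c * x + ε)) (by fun_prop) (fun x => h_nonneg _) (fun x => h_le _)
  have d2 := dp_real h0.le hP (d := -Δ) (by rw [abs_neg, abs_of_pos hΔ])
    (f := fun x => h (-(c * x) + ε)) (by fun_prop) (fun x => h_nonneg _) (fun x => h_le _)
  have s1 : ∀ x, c * (x - Δ) + ε = c * x := fun x => by linarith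
  have s2 : ∀ x, -(c * (x - -Δ)) + ε = -(c * x) := fun x => by linarith
  simp only [s1] at d1
  simp only [s2] at d2
  have ii : ∀ g : ℝ → ℝ, Measurable g → Integrable (fun x => h (g x)) P := fun g hg =>
    Integrable.of_bound (hm.comp hg).aestronglyMeasurable (A - 1 / 3)
    (ae_of_all _ fun x => by rw [Real.norm_eq_abs, abs_of_nonneg (h_nonneg _)]; exact h_le _)
  have j1 := ii (fun x => c * x + ε) (by fun_prop)
  have j2 := ii (fun x => c * x) (by fun_prop)
  have j3 := ii (fun x => -(c * x) + ε) (by fun_prop)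
  have j4 := ii (fun x => -(c * x)) (by fun_prop)
  have m := integral_mono (μ := P)
    (f := fun x => (ε * (1 / 3) - 2 * ε ^ 2) - (ε * c) * |x|)
    (g := fun x => (h (c * x + ε) - Real.exp ε * h (c * x)) +
      (h (-(c * x) + ε) - Real.exp ε * h (-(c * x))))
    ((integrable_const _).sub (ix.const_mul _))
    ((j1.sub (j2.const_mul _)).add (j3.sub (j4.const_mul _)))
    (fun x => by
      have := key2 (c * x) h0 h1
      rw [abs_mul, abs_of_pos hc] at this
      simp only
      linarith)
  have j5 : Integrable (fun x => h (c * x + ε) - Real.exp ε * h (c * x)) P :=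
    j1.sub (j2.const_mul _)
  have j6 : Integrable (fun x => h (-(c * x) + ε) - Real.exp ε * h (-(c * x))) P :=
    j3.sub (j4.const_mul _)
  rw [integral_add j5 j6, integral_sub j1 (j2.const_mul _), integral_sub j3 (j4.const_mul _),
    integral_sub (integrable_const _) (ix.const_mul _)] at m
  simp only [integral_const_mul, integral_const, probReal_univ, one_smul, smul_eq_mul, one_mul] at m
  rw [← ofReal_integral_eq_lintegral_ofReal ix (ae_of_all _ fun x => abs_nonneg x),
    ← ENNReal.ofReal_mul hc.le]
  apply ENNReal.ofReal_le_ofReal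
  have : ε * (1 - 2 * A - 2 * ε) ≤ ε * (c * ∫ x, |x| ∂P) := by nlinarith
  exact le_of_mul_le_mul_left this h0

/-! ### Upper bound -/

noncomputable def fr (B c R x : ℝ) : ℝ :=
  (Set.Icc (-R) R).indicator (fun x => B * Real.exp (-(c * |x|))) x

lemma fr_nonneg {B c R x : ℝ} (hB : 0 ≤ B) : 0 ≤ fr B c R x :=
  Set.indicator_nonneg (fun x _ => by positivity) _

lemma fr_meas (B c R : ℝ) : Measurable (fr B c R) := by
  unfold fr
  exact (by fun_prop : Measurable (fun x : ℝ => B * Real.exp (-(c * |x|)))).indicator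
    measurableSet_Icc

noncomputable def Q (B c R : ℝ) : Measure ℝ :=
  volume.withDensity (fun x => ENNReal.ofReal (fr B c R x))

noncomputable def g1 (B c R Δ x : ℝ) : ℝ :=
  (Set.Icc (R - Δ) R).indicator (fun x => B * Real.exp (-(c * x))) x

lemma g1_nonneg {B c R Δ x : ℝ} (hB : 0 ≤ B) : 0 ≤ g1 B c R Δ x :=
  Set.indicator_nonneg (fun x _ => by positivity) _

lemma g1_meas (B c R Δ : ℝ) : Measurable (g1 B c R Δ) := by
  unfold g1
  exact (by fun_prop : Measurable (fun x : ℝ => B * Real.exp (-(c * x)))).indicator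
    measurableSet_Icc

lemma fr_even (B c R x : ℝ) : fr B c R (-x) = fr B c R x := by
  unfold fr
  by_cases hx : x ∈ Set.Icc (-R) R
  · rw [Set.indicator_of_mem hx, Set.indicator_of_mem (by
      rw [Set.mem_Icc] at *; constructor <;> linarith [hx.1, hx.2]), abs_neg]
  · rw [Set.indicator_of_notMem hx, Set.indicator_of_notMem (fun hx' => hx (by
      rw [Set.mem_Icc] at *; constructor <;> linarith [hx'.1, hx'.2]))]

lemma fr_shift {B c R Δ : ℝ} (hB : 0 ≤ B) (hc : 0 < c) {d : ℝ} (hd0 : 0 ≤ d) (hd : d ≤ Δ) (x : ℝ) :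
    fr B c R x ≤ Real.exp (c * Δ) * fr B c R (x + d) + g1 B c R Δ x := by
  have hg := g1_nonneg (B := B) (c := c) (R := R) (Δ := Δ) (x := x) hB
  have hf := fr_nonneg (B := B) (c := c) (R := R) (x := x + d) hB
  by_cases hx : x ∈ Set.Icc (-R) R
  · by_cases hxd : x + d ≤ R
    · have : fr B c R x ≤ Real.exp (c * Δ) * fr B c R (x + d) := by
        unfold fr
        rw [Set.indicator_of_mem hx, Set.indicator_of_mem (Set.mem_Icc.2 ⟨by linarith [hx.1], hxd⟩),
          mul_left_comm, ← Real.exp_add]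
        apply mul_le_mul_of_nonneg_left _ hB
        apply Real.exp_le_exp.2
        have : |x + d| ≤ |x| + Δ := (abs_add_le _ _).trans (by rw [abs_of_nonneg hd0]; linarith)
        nlinarith
      linarith
    · have : fr B c R x ≤ g1 B c R Δ x := by
        unfold fr g1
        rw [Set.indicator_of_mem hx, Set.indicator_of_mem (Set.mem_Icc.2 ⟨by linarith, hx.2⟩)]
        apply mul_le_mul_of_nonneg_left _ hB
        apply Real.exp_le_exp.2
        have := le_abs_self x
        nlinarith
      have := mul_nonneg (Real.exp_pos (c * Δ)).le hf
      linarith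
  · have : fr B c R x = 0 := by unfold fr; rw [Set.indicator_of_notMem hx]
    rw [this]
    have := mul_nonneg (Real.exp_pos (c * Δ)).le hf
    linarith

lemma int_exp {c : ℝ} (hc : 0 < c) (a b : ℝ) :
    ∫ x in a..b, Real.exp (-(c * x)) = (Real.exp (-(c * a)) - Real.exp (-(c * b))) / c := by
  have : ∀ x ∈ Set.uIcc a b, HasDerivAt (fun x => -(Real.exp (-(c * x)) / c))
      (Real.exp (-(c * x))) x := fun x _ => by
    have h1 : HasDerivAt (fun x : ℝ => -(c * x)) (-(c * 1)) x := ((hasDerivAt_id x).const_mul c).neg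
    refine (h1.exp.div_const c).neg.congr_deriv ?_
    field_simp
  rw [intervalIntegral.integral_eq_sub_of_hasDerivAt this
    ((by fun_prop : Continuous fun x => Real.exp (-(c * x))).intervalIntegrable _ _)]
  ring

lemma int_xexp {c : ℝ} (hc : 0 < c) (b : ℝ) :
    ∫ x in (0 : ℝ)..b, x * Real.exp (-(c * x)) =
      (1 - Real.exp (-(c * b)) * (1 + c * b)) / c ^ 2 := by
  have : ∀ x ∈ Set.uIcc 0 b, HasDerivAt (fun x => -(Real.exp (-(c * x)) * (1 + c * x) / c ^ 2))
      (x * Real.exp (-(c * x))) x := fun x _ => by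
    have h0 : HasDerivAt (fun x : ℝ => c * x) (c * 1) x := (hasDerivAt_id x).const_mul c
    have h1 : HasDerivAt (fun x : ℝ => -(c * x)) (-(c * 1)) x := h0.neg
    refine ((h1.exp.mul (h0.const_add 1)).div_const (c ^ 2)).neg.congr_deriv ?_
    field_simp
    ring
  rw [intervalIntegral.integral_eq_sub_of_hasDerivAt this
    ((by fun_prop : Continuous fun x => x * Real.exp (-(c * x))).intervalIntegrable _ _)]
  simp
  ring

/-- even integrals -/
lemma lint_even {R : ℝ} (hR : 0 ≤ R) {g : ℝ → ℝ} (hg : Continuous g) (h0 : ∀ x, 0 ≤ x → 0 ≤ g x) :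
    ∫⁻ x in Set.Icc (-R) R, ENNReal.ofReal (g |x|) =
      ENNReal.ofReal (2 * ∫ x in (0 : ℝ)..R, g x) := by
  have hga : Continuous (fun x => g |x|) := by fun_prop
  rw [← ofReal_integral_eq_lintegral_ofReal (hga.integrableOn_Icc)
    (ae_of_all _ fun x => h0 _ (abs_nonneg x)), integral_Icc_eq_integral_Ioc,
    ← intervalIntegral.integral_of_le (by linarith)]
  congr 1
  rw [← intervalIntegral.integral_add_adjacent_intervals (b := 0)
    (hga.intervalIntegrable _ _) (hga.intervalIntegrable _ _)]
  have e2 : ∫ x in (0 : ℝ)..R, g |x| = ∫ x in (0 : ℝ)..R, g x := by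
    apply intervalIntegral.integral_congr
    intro x hx
    rw [Set.uIcc_of_le hR] at hx
    simp only [abs_of_nonneg hx.1]
  have e1 : ∫ x in (-R)..0, g |x| = ∫ x in (0 : ℝ)..R, g |x| := by
    have := intervalIntegral.integral_comp_neg (a := 0) (b := R) (fun x => g |x|)
    simp only [abs_neg, neg_zero] at this
    exact this.symm
  rw [e1, e2]; ring

lemma lint_g1 {B c R Δ : ℝ} (hB : 0 ≤ B) (hc : 0 < c) (hΔ : 0 < Δ) :
    ∫⁻ x, ENNReal.ofReal (g1 B c R Δ x) =
      ENNReal.ofReal (B * ((Real.exp (-(c * (R - Δ))) - Real.exp (-(c * R))) / c)) := by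
  have : ∀ x, ENNReal.ofReal (g1 B c R Δ x) = (Set.Icc (R - Δ) R).indicator
      (fun x => ENNReal.ofReal (B * Real.exp (-(c * x)))) x := fun x => by
    unfold g1; by_cases hx : x ∈ Set.Icc (R - Δ) R <;> simp [hx]
  simp_rw [this]
  rw [lintegral_indicator measurableSet_Icc, ← ofReal_integral_eq_lintegral_ofReal
    (by fun_prop : Continuous fun x => B * Real.exp (-(c * x))).integrableOn_Icc
    (ae_of_all _ fun x => by positivity), integral_Icc_eq_integral_Ioc,
    ← intervalIntegral.integral_of_le (by linarith), intervalIntegral.integral_const_mul,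
    int_exp hc]

lemma Q_dp_pos {B c R Δ δ : ℝ} (hB : 0 ≤ B) (hc : 0 < c) 
    (hg : ∫⁻ x, ENNReal.ofReal (g1 B c R Δ x) ≤ ENNReal.ofReal δ)
    {d : ℝ} (hd : |d| ≤ Δ) (S : Set ℝ) (hS : MeasurableSet S) :
    Q B c R S ≤ ENNReal.ofReal (Real.exp (c * Δ)) * Q B c R ((fun s => s + d) '' S)
      + ENNReal.ofReal δ := by
  have him : (fun s => s + d) '' S = (fun x => x - d) ⁻¹' S := by
    ext x; simp only [Set.mem_image, Set.mem_preimage]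
    constructor
    · rintro ⟨y, hy, rfl⟩; simpa using hy
    · intro hx; exact ⟨x - d, hx, by ring⟩
  have hS' : MeasurableSet ((fun s => s + d) '' S) := by
    rw [him]; exact (by fun_prop : Measurable fun x : ℝ => x - d) hS
  have e : Q B c R ((fun s => s + d) '' S) = ∫⁻ x in S, ENNReal.ofReal (fr B c R (x + d)) := by
    unfold Q
    rw [withDensity_apply _ hS', ← lintegral_indicator hS', ← lintegral_indicator hS,
      ← lintegral_add_right_eq_self _ d]
    congr 1; ext x
    by_cases hx : x ∈ S
    · rw [Set.indicator_of_mem hx, Set.indicator_of_mem (Set.mem_image_of_mem (fun s => s + d) hx)]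
    · rw [Set.indicator_of_notMem hx, Set.indicator_of_notMem]
      rw [him]; simpa using hx
  have hfm := fr_meas B c R
  have hgm := g1_meas B c R Δ
  have hmain : ∃ g : ℝ → ℝ, Measurable g ∧ (∀ x, 0 ≤ g x) ∧
      (∫⁻ x, ENNReal.ofReal (g x) ≤ ENNReal.ofReal δ) ∧
      ∀ x, fr B c R x ≤ Real.exp (c * Δ) * fr B c R (x + d) + g x := by
    rcases le_total 0 d with h0 | h0
    · rw [abs_of_nonneg h0] at hd
      exact ⟨_, hgm, fun x => g1_nonneg hB, hg, fr_shift hB hc h0 hd⟩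
    · rw [abs_of_nonpos h0] at hd
      refine ⟨fun x => g1 B c R Δ (-x), by fun_prop, fun x => g1_nonneg hB, ?_, fun x => ?_⟩
      · rw [lintegral_neg_eq_self (fun x => ENNReal.ofReal (g1 B c R Δ x))]; exact hg
      · have := fr_shift (R := R) hB hc (d := -d) (by linarith) hd (-x)
        rwa [fr_even, ← neg_add, fr_even] at this
  obtain ⟨g, gm, g0, gi, gs⟩ := hmain
  rw [e]
  unfold Q
  rw [withDensity_apply _ hS, ← lintegral_const_mul' _ _ ENNReal.ofReal_ne_top]
  calc ∫⁻ x in S, ENNReal.ofReal (fr B c R x)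
      ≤ ∫⁻ x in S, (ENNReal.ofReal (Real.exp (c * Δ)) * ENNReal.ofReal (fr B c R (x + d))
          + ENNReal.ofReal (g x)) := by
        refine lintegral_mono (fun x => ?_)
        rw [← ENNReal.ofReal_mul (Real.exp_pos _).le, ← ENNReal.ofReal_add
          (mul_nonneg (Real.exp_pos _).le (fr_nonneg hB)) (g0 x)]
        exact ENNReal.ofReal_le_ofReal (gs x)
    _ = _ := lintegral_add_right _ (by fun_prop)
    _ ≤ _ := by
        gcongr
        exact (setLIntegral_le_lintegral _ _).trans gi

lemma Q_lint {B c R : ℝ} (hB : 0 ≤ B) (hc : 0 < c) (hR : 0 ≤ R) :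
    Q B c R Set.univ = ENNReal.ofReal (2 * (B * ((1 - Real.exp (-(c * R))) / c))) ∧
    ∫⁻ x, ENNReal.ofReal |x| ∂(Q B c R) =
      ENNReal.ofReal (2 * (B * ((1 - Real.exp (-(c * R)) * (1 + c * R)) / c ^ 2))) := by
  have e : ∀ x, ENNReal.ofReal (fr B c R x) = (Set.Icc (-R) R).indicator
      (fun x => ENNReal.ofReal (B * Real.exp (-(c * |x|)))) x := fun x => by
    unfold fr; by_cases hx : x ∈ Set.Icc (-R) R
    · simp only [Set.indicator_of_mem hx]
    · simp only [Set.indicator_of_notMem hx, ENNReal.ofReal_zero]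
  constructor
  · unfold Q
    rw [withDensity_apply _ MeasurableSet.univ, Measure.restrict_univ]
    simp_rw [e]
    rw [lintegral_indicator measurableSet_Icc,
      lint_even hR (g := fun x => B * Real.exp (-(c * x))) (by fun_prop) (fun x _ => by positivity),
      intervalIntegral.integral_const_mul, int_exp hc]
    simp
  · unfold Q
    have hfm := fr_meas B c R
    rw [lintegral_withDensity_eq_lintegral_mul _ (by fun_prop) (by fun_prop)]
    have e' : ∀ x, ((fun x => ENNReal.ofReal (fr B c R x)) * fun x => ENNReal.ofReal |x|) x =
        (Set.Icc (-R) R).indicator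
        (fun x => ENNReal.ofReal (B * (|x| * Real.exp (-(c * |x|))))) x := fun x => by
      rw [Pi.mul_apply, e]
      by_cases hx : x ∈ Set.Icc (-R) R
      · simp only [Set.indicator_of_mem hx]
        rw [← ENNReal.ofReal_mul (by positivity)]; congr 1; ring
      · simp only [Set.indicator_of_notMem hx, zero_mul]
    simp_rw [e']
    rw [lintegral_indicator measurableSet_Icc,
      lint_even hR (g := fun x => B * (x * Real.exp (-(c * x)))) (by fun_prop)
        (fun x _ => by positivity),
      intervalIntegral.integral_const_mul, int_xexp hc]

lemma upper {Δ ε : ℝ} (hΔ : 0 < Δ) (h0 : 0 < ε) {t : ℝ} (ht : t = (Real.exp ε - 1) / ε / 2) :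
    ENNReal.ofReal (ε / Δ) * VoptL1 ε ε Δ ≤ ENNReal.ofReal (1 - Real.log (1 + t) / t) := by
  have hc : 0 < ε / Δ := by positivity
  set c := ε / Δ with hcdef
  have hcΔ : c * Δ = ε := by rw [hcdef]; field_simp
  have he : 0 < Real.exp ε - 1 := by linarith [Real.add_one_le_exp ε]
  have ht0 : 0 < t := by rw [ht]; positivity
  have hte : Real.exp ε - 1 = 2 * t * ε := by rw [ht]; field_simp
  set R := Real.log (1 + t) / c with hRdef
  have hcR : c * R = Real.log (1 + t) := by rw [hRdef]; field_simp
  have hR : 0 ≤ R := div_nonneg (Real.log_nonneg (by linarith)) hc.le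
  set B := c * (1 + t) / (2 * t) with hBdef
  have hB : 0 ≤ B := by positivity
  have hexp : Real.exp (-(c * R)) = (1 + t)⁻¹ := by
    rw [hcR, Real.exp_neg, Real.exp_log (by linarith)]
  obtain ⟨q1, q2⟩ := Q_lint (R := R) hB hc hR
  have hp : IsProbabilityMeasure (Q B c R) := ⟨by
    rw [q1, hexp, ← ENNReal.ofReal_one]; congr 1
    rw [hBdef]; field_simp; ring⟩
  have hdp : SatisfiesDP ε ε Δ (Q B c R) := by
    intro d hd S hS
    have hg : ∫⁻ x, ENNReal.ofReal (g1 B c R Δ x) ≤ ENNReal.ofReal ε := by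
      rw [lint_g1 hB hc hΔ]
      apply ENNReal.ofReal_le_ofReal
      have : -(c * (R - Δ)) = -(c * R) + ε := by rw [← hcΔ]; ring
      rw [this, Real.exp_add, hexp]
      have e2 : Real.exp ε = 1 + 2 * t * ε := by linarith
      rw [e2, hBdef]
      apply le_of_eq
      field_simp
      ring
    have := Q_dp_pos (R := R) hB hc hg hd S hS
    rwa [hcΔ] at this
  have hV : VoptL1 ε ε Δ ≤ ∫⁻ x, ENNReal.ofReal |x| ∂(Q B c R) := by
    unfold VoptL1
    exact iInf_le_of_le _ (iInf_le_of_le hp (iInf_le _ hdp))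
  refine (mul_le_mul_right hV _).trans ?_
  rw [q2, ← ENNReal.ofReal_mul hc.le, hexp, hcR]
  apply ENNReal.ofReal_le_ofReal
  apply le_of_eq
  rw [hBdef]
  field_simp
  ring

end VoptAux


/-- For fixed Δ > 0, in the regime δ = ε → 0⁺ the minimum noise
amplitude satisfies lim (ε/Δ)·V_opt^{L1}(ε, ε, Δ) = 1 − 2 log(3/2). -/
theorem VoptL1_asymptotics_diagonal
    (Δ : ℝ) (hΔ : 0 < Δ) :
    Tendsto (fun ε : ℝ => ENNReal.ofReal (ε / Δ) * VoptL1 ε ε Δ)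
      (nhdsWithin 0 (Set.Ioi 0))
      (nhds (ENNReal.ofReal (1 - 2 * Real.log (3 / 2)))) := by
  have hlow : Tendsto (fun ε : ℝ => ENNReal.ofReal (1 - 2 * Real.log (3 / 2) - 2 * ε))
      (nhdsWithin 0 (Set.Ioi 0)) (nhds (ENNReal.ofReal (1 - 2 * Real.log (3 / 2)))) := by
    apply ENNReal.tendsto_ofReal
    have : Continuous (fun ε : ℝ => 1 - 2 * Real.log (3 / 2) - 2 * ε) := by fun_prop
    have := (this.tendsto 0).mono_left (nhdsWithin_le_nhds (s := Set.Ioi 0))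
    simpa using this
  have ht : Tendsto (fun ε : ℝ => (Real.exp ε - 1) / ε / 2) (nhdsWithin 0 (Set.Ioi 0))
      (nhds (1 / 2)) := by
    have h1 := (Real.hasDerivAt_exp 0).tendsto_slope_zero_right
    simp only [zero_add, Real.exp_zero, smul_eq_mul] at h1
    have := h1.div_const 2
    refine this.congr (fun x => ?_)
    ring
  have hupp : Tendsto (fun ε : ℝ => ENNReal.ofReal
      (1 - Real.log (1 + (Real.exp ε - 1) / ε / 2) / ((Real.exp ε - 1) / ε / 2)))
      (nhdsWithin 0 (Set.Ioi 0)) (nhds (ENNReal.ofReal (1 - 2 * Real.log (3 / 2)))) := by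
    apply ENNReal.tendsto_ofReal
    have h2 := ((ht.const_add 1).log (by norm_num)).div ht (by norm_num)
    have h3 := h2.const_sub 1
    convert h3 using 2
    norm_num
    ring
  refine tendsto_of_tendsto_of_tendsto_of_le_of_le' hlow hupp ?_ ?_
  · filter_upwards [Ioc_mem_nhdsGT (zero_lt_one' ℝ)] with ε hε
    have hc : 0 < ε / Δ := div_pos hε.1 hΔ
    unfold VoptL1
    simp only [ENNReal.mul_iInf_of_ne (by simpa using hc) ENNReal.ofReal_ne_top]
    refine le_iInf fun P => le_iInf fun hP => le_iInf fun hdp => ?_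
    exact VoptAux.lower hΔ hε.1 hε.2 hdp
  · filter_upwards [self_mem_nhdsWithin] with ε hε
    exact VoptAux.upper hΔ hε rfl
end
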